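/- arXiv:1103.0203 — 3 statements merged into one kernel-verified Lean document; each statement's English description precedes it below -/
import Mathlib

section
/- Let n ≥ 1, d ≥ 3, and m = ⌈d/2⌉. Assume r ≤ binom(n+m,n) − n − 1 if d is even, and r ≤ binom(n+m−1,n) if d is odd. Then for a general tuple (v_1,…,v_r) ∈ (ℂ^{n+1})^r, setting f = Σ_{i=1}^r v_i^d and Z = {v_1,…,v_r}: (a) ker C_f^m = I_{Z,m}; (b) a nonzero w ∈ ℂ^{n+1} satisfies p(w) = 0 for every p ∈ I_{Z,m} if and only if w is a scalar multiple of some v_i (i.e., the common projective zero set of I_{Z,m} is exactly {[v_1],…,[v_r]}); (c) f has symmetric rank r and its rank-r Waring decomposition is unique up to permutation and scaling. -/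
open MvPolynomial

/-- The linear form `ℓ_v = Σ_j v_j x_j` associated to a vector `v ∈ ℂ^k`. -/
noncomputable def linForm (k : ℕ) (v : Fin k → ℂ) : MvPolynomial (Fin k) ℂ :=
  ∑ j, MvPolynomial.C (v j) * MvPolynomial.X j

/-- `diffOp p f = p(∂/∂x_0, …, ∂/∂x_{k-1})(f)`: the constant-coefficient differential
operator associated to `p`, applied to `f`.  For `p` homogeneous of degree `m` this is
the catalecticant `C_f^m` applied to `p`. -/
noncomputable def diffOp {k : ℕ} (p f : MvPolynomial (Fin k) ℂ) : MvPolynomial (Fin k) ℂ :=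
  ∑ μ ∈ p.support, p.coeff μ •
    (((μ.support.sort (· ≤ ·)).map fun i =>
        ((MvPolynomial.pderiv i).toLinearMap :
          Module.End ℂ (MvPolynomial (Fin k) ℂ)) ^ (μ i)).prod f)

/-- The (symmetric/Waring) rank of `f`: the least `r` such that
`f = Σ_{i=1}^r c_i ℓ_{v_i}^d` with all `v_i ≠ 0`. -/
noncomputable def waringRank (n d : ℕ) (f : MvPolynomial (Fin (n+1)) ℂ) : ℕ :=
  sInf {r : ℕ | ∃ (c : Fin r → ℂ) (v : Fin r → (Fin (n+1) → ℂ)),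
    (∀ i, v i ≠ 0) ∧ f = ∑ i, c i • (linForm (n+1) (v i)) ^ d}

/-- The rank-`r` decomposition `f = Σ c_i ℓ_{v_i}^d` is unique up to permutation and
scaling: every decomposition `f = Σ c_i' ℓ_{w_i}^d` with all `c_i' ≠ 0`, `w_i ≠ 0` is
obtained from it by a permutation `σ` and nonzero scalars `λ_i` with `w_i = λ_i v_{σ i}`
and `c_i' λ_i^d = c_{σ i}`. -/
def UniqueDecomp (n d r : ℕ) (f : MvPolynomial (Fin (n+1)) ℂ)
    (c : Fin r → ℂ) (v : Fin r → Fin (n+1) → ℂ) : Prop :=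
  ∀ (c' : Fin r → ℂ) (w : Fin r → Fin (n+1) → ℂ),
    (∀ i, c' i ≠ 0) → (∀ i, w i ≠ 0) →
    f = ∑ i, c' i • (linForm (n+1) (w i)) ^ d →
    ∃ (σ : Equiv.Perm (Fin r)) (lam : Fin r → ℂ),
      (∀ i, lam i ≠ 0) ∧ (∀ i, w i = lam i • v (σ i)) ∧ (∀ i, c' i * lam i ^ d = c (σ i))


section DiffOp

variable {k : ℕ}

lemma linForm_smul (c : ℂ) (v : Fin k → ℂ) : linForm k (c • v) = C c * linForm k v := by
  simp [linForm, Finset.mul_sum, mul_assoc]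

lemma pderiv_linForm (v : Fin k → ℂ) (i : Fin k) : pderiv i (linForm k v) = C (v i) := by
  simp [linForm, Derivation.leibniz, pderiv_X, Pi.single_apply]

lemma pderiv_pow_linForm_pow (v : Fin k → ℂ) (i : Fin k) (a d : ℕ) :
    (((pderiv i).toLinearMap : Module.End ℂ (MvPolynomial (Fin k) ℂ)) ^ a) (linForm k v ^ d) =
      ((d.descFactorial a : ℂ) * v i ^ a) • linForm k v ^ (d - a) := by
  induction a with
  | zero => simp
  | succ a ih =>
    rw [pow_succ', Module.End.mul_apply, ih, map_smul, Derivation.coeFn_coe,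
      Derivation.leibniz_pow, pderiv_linForm, Nat.descFactorial_succ, Nat.sub_sub]
    simp only [smul_eq_C_mul, nsmul_eq_mul, smul_eq_mul, C_mul, C_pow, Nat.cast_mul, map_natCast]
    ring

lemma list_pderiv_prod_linForm_pow (v : Fin k → ℂ) (μ : Fin k → ℕ) (d : ℕ) (l : List (Fin k)) :
    ((l.map fun i => ((pderiv i).toLinearMap : Module.End ℂ (MvPolynomial (Fin k) ℂ)) ^ μ i).prod)
        (linForm k v ^ d) =
      ((d.descFactorial (l.map μ).sum : ℂ) * (l.map fun i => v i ^ μ i).prod) •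
        linForm k v ^ (d - (l.map μ).sum) := by
  induction l with
  | nil => simp
  | cons i l ih =>
    have h : d.descFactorial ((l.map μ).sum + μ i) =
        (d - (l.map μ).sum).descFactorial (μ i) * d.descFactorial (l.map μ).sum := by
      simpa using (Nat.descFactorial_mul_descFactorial (n := d)
        (Nat.le_add_right (l.map μ).sum (μ i))).symm
    simp only [List.map_cons, List.prod_cons, List.sum_cons, Module.End.mul_apply, ih, map_smul,
      pderiv_pow_linForm_pow, smul_smul, h, Nat.sub_sub, add_comm (μ i)]
    push_cast
    congr 1
    ring

lemma diffOp_linForm_pow {p : MvPolynomial (Fin k) ℂ} {m : ℕ} (hp : p.IsHomogeneous m)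
    (v : Fin k → ℂ) (d : ℕ) :
    diffOp p (linForm k v ^ d) =
      ((d.descFactorial m : ℂ) * eval v p) • linForm k v ^ (d - m) := by
  rw [diffOp, eval_eq, Finset.mul_sum, Finset.sum_smul]
  refine Finset.sum_congr rfl fun μ hμ => ?_
  have hs : ((μ.support.sort (· ≤ ·)).map μ).sum = m := by
    rw [hp.degree_eq_sum_deg_support hμ, ← Multiset.sum_coe,
      ← Multiset.map_coe, Finset.sort_eq]
    rfl
  have hprod : ((μ.support.sort (· ≤ ·)).map fun i => v i ^ μ i).prod =
      ∏ i ∈ μ.support, v i ^ μ i := by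
    rw [← Multiset.prod_coe, ← Multiset.map_coe, Finset.sort_eq]
    rfl
  rw [list_pderiv_prod_linForm_pow, hs, hprod, smul_smul]
  congr 1
  ring

lemma diffOp_sum {ι : Type*} (s : Finset ι) (p : MvPolynomial (Fin k) ℂ)
    (f : ι → MvPolynomial (Fin k) ℂ) :
    diffOp p (∑ i ∈ s, f i) = ∑ i ∈ s, diffOp p (f i) := by
  simp only [diffOp, map_sum, Finset.smul_sum]
  exact Finset.sum_comm

lemma diffOp_smul (p f : MvPolynomial (Fin k) ℂ) (c : ℂ) :
    diffOp p (c • f) = c • diffOp p f := by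
  simp only [diffOp, map_smul, Finset.smul_sum, smul_comm c]

end DiffOp

section DualForms

variable {n r : ℕ}

/-- The forms `e i` of degree `s` are dual to the vectors `v j`: `e i (v j) = δ_{ij}`. -/
structure DualForms (s : ℕ) (v : Fin r → Fin (n + 1) → ℂ)
    (e : Fin r → MvPolynomial (Fin (n + 1)) ℂ) : Prop where
  isHomogeneous : ∀ i, (e i).IsHomogeneous s
  eval_eq : ∀ i j, eval (v j) (e i) = if i = j then 1 else 0

/-- The common zeros of `I_{Z,m}` for `Z = {v_1, …, v_r}`. -/
def baseLocus (m : ℕ) (v : Fin r → Fin (n + 1) → ℂ) : Set (Fin (n + 1) → ℂ) :=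
  {w | ∀ p : MvPolynomial (Fin (n + 1)) ℂ, p.IsHomogeneous m →
    (∀ i, eval (v i) p = 0) → eval w p = 0}

lemma eval_smul_of_isHomogeneous {p : MvPolynomial (Fin (n + 1)) ℂ} {m : ℕ}
    (hp : p.IsHomogeneous m) (c : ℂ) (w : Fin (n + 1) → ℂ) :
    eval (c • w) p = c ^ m * eval w p := by
  rw [eval_eq, eval_eq, Finset.mul_sum]
  refine Finset.sum_congr rfl fun μ hμ => ?_
  rw [hp.degree_eq_sum_deg_support hμ, ← Finset.prod_pow_eq_pow_sum]
  simp only [Pi.smul_apply, smul_eq_mul, mul_pow, Finset.prod_mul_distrib]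
  ring

lemma isHomogeneous_smul {p : MvPolynomial (Fin (n + 1)) ℂ} {m : ℕ}
    (hp : p.IsHomogeneous m) (c : ℂ) : (c • p).IsHomogeneous m := by
  rw [smul_eq_C_mul]; exact hp.C_mul c

lemma exists_linForm_separating {v w : Fin (n + 1) → ℂ} (hv : v ≠ 0)
    (h : ∀ c : ℂ, w ≠ c • v) :
    ∃ l : MvPolynomial (Fin (n + 1)) ℂ, l.IsHomogeneous 1 ∧ eval v l = 0 ∧ eval w l ≠ 0 := by
  obtain ⟨i, hi⟩ := Function.ne_iff.mp hv
  have hi : v i ≠ 0 := hi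
  obtain ⟨j, hj⟩ := Function.ne_iff.mp (h (w i / v i))
  refine ⟨C (v i) * X j - C (v j) * X i,
    (isHomogeneous_C_mul_X _ _).sub (isHomogeneous_C_mul_X _ _), by simp [mul_comm], ?_⟩
  intro h0
  apply hj
  simp only [map_sub, map_mul, eval_C, eval_X, sub_eq_zero] at h0
  simp only [Pi.smul_apply, smul_eq_mul]
  field_simp
  linear_combination h0

namespace DualForms

variable {s : ℕ} {v : Fin r → Fin (n + 1) → ℂ} {e : Fin r → MvPolynomial (Fin (n + 1)) ℂ}

lemma ne_zero (he : DualForms s v e) (hs : s ≠ 0) (i : Fin r) : v i ≠ 0 := by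
  intro h
  have h1 := he.eval_eq i i
  have h2 := eval_smul_of_isHomogeneous (he.isHomogeneous i) 0 (v i)
  rw [zero_smul, ← h, h1, zero_pow hs] at h2
  simp at h2

lemma eval_sum (he : DualForms s v e) (a : Fin r → ℂ) (j : Fin r) :
    eval (v j) (∑ i, a i • e i) = a j := by
  simp [he.eval_eq, smul_eval]

lemma isHomogeneous_sum (he : DualForms s v e) (a : Fin r → ℂ) :
    (∑ i, a i • e i).IsHomogeneous s :=
  IsHomogeneous.sum _ _ _ fun i _ => isHomogeneous_smul (he.isHomogeneous i) _

lemma mul {t : ℕ} {e' : Fin r → MvPolynomial (Fin (n + 1)) ℂ} (he : DualForms s v e)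
    (he' : DualForms t v e') : DualForms (s + t) v fun i => e i * e' i where
  isHomogeneous i := (he.isHomogeneous i).mul (he'.isHomogeneous i)
  eval_eq i j := by simp [he.eval_eq, he'.eval_eq]

lemma exists_add (he : DualForms s v e) (hv : ∀ i, v i ≠ 0) (t : ℕ) :
    ∃ e', DualForms (s + t) v e' := by
  have h : ∀ i, ∃ l : MvPolynomial (Fin (n + 1)) ℂ, l.IsHomogeneous 1 ∧ eval (v i) l = 1 := by
    intro i
    obtain ⟨j, hj⟩ := Function.ne_iff.mp (hv i)
    have hj : v i j ≠ 0 := hj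
    exact ⟨C (v i j)⁻¹ * X j, isHomogeneous_C_mul_X _ _, by simp [hj]⟩
  choose l hl hl1 using h
  refine ⟨fun i => e i * l i ^ t, fun i => ?_, fun i j => ?_⟩
  · simpa using (he.isHomogeneous i).mul ((hl i).pow t)
  · by_cases hij : i = j
    · subst hij; simp [he.eval_eq, hl1]
    · simp [he.eval_eq, hij]

/-- Powers of the linear forms of points with dual forms are linearly independent. -/
lemma linForm_pow_eq_zero (he : DualForms s v e) {a : Fin r → ℂ}
    (h : ∑ i, a i • linForm (n + 1) (v i) ^ s = 0) (i : Fin r) : a i = 0 := by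
  have h1 := congrArg (diffOp (e i)) h
  rw [diffOp_sum] at h1
  simp only [diffOp_smul, diffOp_linForm_pow (he.isHomogeneous i), he.eval_eq] at h1
  simpa [diffOp, Nat.descFactorial_self, Nat.factorial_ne_zero, smul_smul] using h1

/-- If `Z` imposes independent conditions in degree `s`, then `I_{Z,s+1}` cuts out `Z`. -/
lemma mem_baseLocus_succ (he : DualForms s v e) (hv : ∀ i, v i ≠ 0) {w : Fin (n + 1) → ℂ}
    (hw : w ≠ 0) (hb : w ∈ baseLocus (s + 1) v) : ∃ i, ∃ c : ℂ, w = c • v i := by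
  by_contra! hcon
  have hei : ∀ i, eval w (e i) = 0 := by
    intro i
    obtain ⟨l, hl, hlv, hlw⟩ := exists_linForm_separating (hv i) (hcon i)
    have := hb (e i * l) ((he.isHomogeneous i).mul hl) fun j => by
      by_cases hij : i = j
      · subst hij; simp [hlv]
      · simp [he.eval_eq, hij]
    simpa [hlw] using this
  obtain ⟨j, hj⟩ := Function.ne_iff.mp hw
  have hj : w j ≠ 0 := hj
  let q : MvPolynomial (Fin (n + 1)) ℂ := X j ^ s - ∑ i, v i j ^ s • e i
  have hq : q.IsHomogeneous s := (isHomogeneous_X_pow j s).sub (he.isHomogeneous_sum _)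
  have hqv : ∀ i, eval (v i) q = 0 := fun i => by
    simp only [q, map_sub, he.eval_sum]; simp
  have := hb (q * X j) (hq.mul (isHomogeneous_X _ j)) fun i => by simp [hqv]
  simp [q, hei, hj, smul_eval] at this

end DualForms

lemma diffOp_sum_linForm_pow_eq_zero_iff {m d : ℕ} {v : Fin r → Fin (n + 1) → ℂ}
    {e : Fin r → MvPolynomial (Fin (n + 1)) ℂ} (he : DualForms (d - m) v e) (hmd : m ≤ d)
    {p : MvPolynomial (Fin (n + 1)) ℂ} (hp : p.IsHomogeneous m) :
    diffOp p (∑ i, linForm (n + 1) (v i) ^ d) = 0 ↔ ∀ i, eval (v i) p = 0 := by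
  have hne : (d.descFactorial m : ℂ) ≠ 0 := by
    exact_mod_cast (Nat.descFactorial_pos.mpr hmd).ne'
  rw [diffOp_sum]
  simp only [diffOp_linForm_pow hp]
  refine ⟨fun h i => ?_, fun h => by simp [h]⟩
  simpa [hne] using he.linForm_pow_eq_zero h i

section Waring

variable {m d : ℕ} {v : Fin r → Fin (n + 1) → ℂ} {e e' : Fin r → MvPolynomial (Fin (n + 1)) ℂ}

/-- A form of degree `m` killed at the points of another decomposition vanishes on `Z`. -/
lemma eval_eq_zero_of_decomposition (he' : DualForms (d - m) v e') (hmd : m ≤ d)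
    {r' : ℕ} {c : Fin r' → ℂ} {w : Fin r' → Fin (n + 1) → ℂ}
    (hf : ∑ i, linForm (n + 1) (v i) ^ d = ∑ i, c i • linForm (n + 1) (w i) ^ d)
    {p : MvPolynomial (Fin (n + 1)) ℂ} (hp : p.IsHomogeneous m)
    (hpw : ∀ j, eval (w j) p = 0) (i : Fin r) : eval (v i) p = 0 := by
  refine (diffOp_sum_linForm_pow_eq_zero_iff he' hmd hp).mp ?_ i
  rw [hf, diffOp_sum]
  simp [diffOp_smul, diffOp_linForm_pow hp, hpw]

/-- Evaluation at `w_1, …, w_r'` of the forms spanned by `e`. -/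
noncomputable def evalDual (e : Fin r → MvPolynomial (Fin (n + 1)) ℂ) {r' : ℕ}
    (w : Fin r' → Fin (n + 1) → ℂ) : (Fin r → ℂ) →ₗ[ℂ] (Fin r' → ℂ) where
  toFun a j := eval (w j) (∑ i, a i • e i)
  map_add' a b := by ext j; simp [add_mul, Finset.sum_add_distrib, smul_eval]
  map_smul' c a := by ext j; simp [Finset.mul_sum, smul_eval, mul_assoc]

lemma evalDual_injective (he : DualForms m v e) (he' : DualForms (d - m) v e') (hmd : m ≤ d)
    {r' : ℕ} {c : Fin r' → ℂ} {w : Fin r' → Fin (n + 1) → ℂ}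
    (hf : ∑ i, linForm (n + 1) (v i) ^ d = ∑ i, c i • linForm (n + 1) (w i) ^ d) :
    Function.Injective (evalDual e w) := by
  rw [← LinearMap.ker_eq_bot, LinearMap.ker_eq_bot']
  intro a ha
  ext i
  rw [← he.eval_sum a i]
  exact eval_eq_zero_of_decomposition he' hmd hf (he.isHomogeneous_sum a) (fun j => congrFun ha j) i

lemma waringRank_eq (he : DualForms m v e) (he' : DualForms (d - m) v e') (hmd : m ≤ d)
    (hv : ∀ i, v i ≠ 0) : waringRank n d (∑ i, linForm (n + 1) (v i) ^ d) = r := by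
  refine le_antisymm (Nat.sInf_le ⟨fun _ => 1, v, hv, by simp⟩)
    (le_csInf ⟨r, fun _ => 1, v, hv, by simp⟩ ?_)
  rintro r' ⟨c, w, -, hf⟩
  simpa using LinearMap.finrank_le_finrank_of_injective (evalDual_injective he he' hmd hf)

lemma uniqueDecomp_of_baseLocus (he : DualForms m v e) (he' : DualForms (d - m) v e')
    (hmd : m ≤ d) (hb : ∀ w ∈ baseLocus m v, w ≠ 0 → ∃ i, ∃ c : ℂ, w = c • v i) :
    UniqueDecomp n d r (∑ i, linForm (n + 1) (v i) ^ d) (fun _ => 1) v := by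
  intro c w _ hw hf
  have hinj := evalDual_injective he he' hmd hf
  have hsurj := LinearMap.surjective_of_injective hinj
  have hbase : ∀ j, w j ∈ baseLocus m v := by
    intro j p hp hpv
    obtain ⟨a, ha⟩ := hsurj fun j => eval (w j) p
    have ha' : ∀ l, eval (w l) (∑ i, a i • e i) = eval (w l) p := fun l => congrFun ha l
    have ha0 : a = 0 := by
      ext i
      have := eval_eq_zero_of_decomposition he' hmd hf (hp.sub (he.isHomogeneous_sum a))
        (fun l => by rw [map_sub, ha', sub_self]) i
      rwa [map_sub, he.eval_sum, hpv, zero_sub, neg_eq_zero] at this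
    rw [← ha', ha0]
    simp
  choose σ lam hlam using fun j => hb (w j) (hbase j) (hw j)
  have hlam0 : ∀ j, lam j ≠ 0 := fun j h => hw j (by rw [hlam, h, zero_smul])
  have hσ : Function.Injective σ := by
    intro j l hjl
    by_contra hne
    obtain ⟨a, ha⟩ := hsurj (Pi.single j 1)
    have h1 : eval (w j) (∑ i, a i • e i) = 1 :=
      (congrFun ha j).trans (Pi.single_eq_same j 1)
    have h2 : eval (w l) (∑ i, a i • e i) = 0 :=
      (congrFun ha l).trans (Pi.single_eq_of_ne (Ne.symm hne) 1)
    rw [hlam, eval_smul_of_isHomogeneous (he.isHomogeneous_sum a)] at h1 h2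
    rw [← hjl] at h2
    rcases mul_eq_zero.mp h2 with h | h
    · exact pow_ne_zero _ (hlam0 l) h
    · rw [h, mul_zero] at h1
      exact zero_ne_one h1
  let τ : Equiv.Perm (Fin r) := Equiv.ofBijective σ (Finite.injective_iff_bijective.mp hσ)
  refine ⟨τ, lam, hlam0, hlam, fun j => ?_⟩
  have hdual : DualForms d v fun i => e i * e' i := by
    have := he.mul he'
    rwa [Nat.add_sub_cancel' hmd] at this
  have hzero : ∑ i, (c (τ.symm i) * lam (τ.symm i) ^ d - 1) • linForm (n + 1) (v i) ^ d = 0 := by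
    rw [← Equiv.sum_comp τ]
    simp only [sub_smul, one_smul, Finset.sum_sub_distrib, Equiv.symm_apply_apply]
    rw [Equiv.sum_comp τ fun i => linForm (n + 1) (v i) ^ d, hf, sub_eq_zero]
    refine Finset.sum_congr rfl fun j _ => ?_
    rw [hlam j, linForm_smul, mul_pow, ← C_pow, ← smul_eq_C_mul, smul_smul]
    rfl
  have := hdual.linForm_pow_eq_zero hzero (τ j)
  simpa [sub_eq_zero] using this

end Waring

end DualForms

section LatticePoints

variable {n : ℕ}

/-- The lattice point `a` of an affine chart, in homogeneous coordinates `(1, a)`. -/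
noncomputable def latticePoint (a : Fin n → ℕ) : Fin (n + 1) → ℂ :=
  Fin.cons 1 fun i => (a i : ℂ)

/-- The homogenized falling factorial `x_i (x_i - x_0) ⋯ (x_i - (m - 1) x_0)`. -/
noncomputable def fallingForm (m : ℕ) (i : Fin n) : MvPolynomial (Fin (n + 1)) ℂ :=
  ∏ j ∈ Finset.range m, (X i.succ - C (j : ℂ) * X 0)

/-- The product of the forms `x_1 + ⋯ + x_n - j x_0` for `j ∈ s`. -/
noncomputable def levelForm (n : ℕ) (s : Finset ℕ) : MvPolynomial (Fin (n + 1)) ℂ :=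
  ∏ j ∈ s, (∑ i : Fin n, X i.succ - C (j : ℂ) * X 0)

lemma isHomogeneous_fallingForm (m : ℕ) (i : Fin n) : (fallingForm m i).IsHomogeneous m := by
  simpa [fallingForm] using IsHomogeneous.prod (Finset.range m) _ (fun _ => 1) fun j _ =>
    (isHomogeneous_X ℂ i.succ).sub (isHomogeneous_C_mul_X (j : ℂ) 0)

lemma isHomogeneous_levelForm (s : Finset ℕ) : (levelForm n s).IsHomogeneous s.card := by
  simpa [levelForm] using IsHomogeneous.prod s _ (fun _ => 1) fun j _ =>
    (IsHomogeneous.sum _ _ _ fun (i : Fin n) _ => isHomogeneous_X ℂ i.succ).sub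
      (isHomogeneous_C_mul_X (j : ℂ) 0)

lemma eval_fallingForm (m : ℕ) (i : Fin n) (a : Fin n → ℕ) :
    eval (latticePoint a) (fallingForm m i) = 0 ↔ a i < m := by
  simp only [fallingForm, map_prod, latticePoint, Finset.prod_eq_zero_iff, Finset.mem_range,
    map_sub, map_mul, eval_C, eval_X, Fin.cons_zero, Fin.cons_succ, mul_one, sub_eq_zero,
    Nat.cast_inj]
  exact ⟨fun ⟨j, hj, h⟩ => h ▸ hj, fun h => ⟨_, h, rfl⟩⟩

lemma eval_levelForm (s : Finset ℕ) (a : Fin n → ℕ) :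
    eval (latticePoint a) (levelForm n s) = 0 ↔ ∑ i, a i ∈ s := by
  simp only [levelForm, map_prod, latticePoint, Finset.prod_eq_zero_iff, map_sub, map_sum,
    map_mul, eval_C, eval_X, Fin.cons_zero, Fin.cons_succ, mul_one, sub_eq_zero]
  norm_cast
  exact ⟨fun ⟨j, hj, h⟩ => h ▸ hj, fun h => ⟨_, h, rfl⟩⟩

/-- The lattice points of the simplex `|a| ≤ s` have dual forms of degree `s`. -/
lemma exists_form_dual_latticePoint {s : ℕ} {a : Fin n → ℕ} (ha : ∑ i, a i ≤ s) :
    ∃ e : MvPolynomial (Fin (n + 1)) ℂ, e.IsHomogeneous s ∧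
      ∀ b : Fin n → ℕ, ∑ i, b i ≤ s → eval (latticePoint b) e = if a = b then 1 else 0 := by
  let e : MvPolynomial (Fin (n + 1)) ℂ :=
    (∏ i, fallingForm (a i) i) * levelForm n (Finset.Ioc (∑ i, a i) s)
  have he : e.IsHomogeneous s := by
    have := (IsHomogeneous.prod Finset.univ (fun i => fallingForm (a i) i) a fun i _ =>
      isHomogeneous_fallingForm (a i) i).mul
        (isHomogeneous_levelForm (n := n) (Finset.Ioc (∑ i, a i) s))
    rwa [Nat.card_Ioc, Nat.add_sub_cancel' ha] at this
  have heval : ∀ b : Fin n → ℕ, ∑ i, b i ≤ s → (eval (latticePoint b) e = 0 ↔ a ≠ b) := by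
    intro b hb
    simp only [e, map_mul, map_prod, mul_eq_zero, Finset.prod_eq_zero_iff, eval_fallingForm,
      eval_levelForm, Finset.mem_univ, true_and, Finset.mem_Ioc]
    constructor
    · rintro (⟨i, hi⟩ | hlt) rfl
      · exact lt_irrefl _ hi
      · exact lt_irrefl _ hlt.1
    · intro hne
      by_contra! hcon
      have hle : ∀ i ∈ Finset.univ, a i ≤ b i := fun i _ => hcon.1 i
      have hsum := Finset.sum_le_sum hle
      have heq : ∑ i, a i = ∑ i, b i :=
        hsum.antisymm (not_lt.mp fun h => (hcon.2 h).not_ge hb)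
      exact hne (funext fun i => (Finset.sum_eq_sum_iff_of_le hle).mp heq i (Finset.mem_univ i))
  refine ⟨(eval (latticePoint a) e)⁻¹ • e, isHomogeneous_smul he _, fun b hb => ?_⟩
  rw [smul_eval]
  split_ifs with hab
  · subst hab
    exact inv_mul_cancel₀ fun h => (heval a ha).mp h rfl
  · rw [(heval b hb).mpr hab, mul_zero]

lemma exists_homogenization {h : MvPolynomial (Fin (n + 1)) ℂ} {t : ℕ} (ht : h.totalDegree ≤ t) :
    ∃ q : MvPolynomial (Fin (n + 1)) ℂ, q.IsHomogeneous t ∧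
      ∀ y : Fin (n + 1) → ℂ, y 0 ≠ 0 → eval y q = y 0 ^ t * eval ((y 0)⁻¹ • y) h := by
  refine ⟨∑ j ∈ Finset.range (h.totalDegree + 1), homogeneousComponent j h * X 0 ^ (t - j),
    IsHomogeneous.sum _ _ _ fun j hj => ?_, fun y hy => ?_⟩
  · have hj : j ≤ t := (Nat.lt_succ_iff.mp (Finset.mem_range.mp hj)).trans ht
    have := (homogeneousComponent_isHomogeneous j h).mul
      (isHomogeneous_X_pow (0 : Fin (n + 1)) (t - j))
    rwa [Nat.add_sub_cancel' hj] at this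
  · conv_rhs => rw [← sum_homogeneousComponent h]
    rw [map_sum, map_sum, Finset.mul_sum]
    refine Finset.sum_congr rfl fun j hj => ?_
    have hj : j ≤ t := (Nat.lt_succ_iff.mp (Finset.mem_range.mp hj)).trans ht
    rw [eval_smul_of_isHomogeneous (homogeneousComponent_isHomogeneous j h), map_mul, map_pow,
      eval_X, pow_sub₀ _ hy hj, inv_pow]
    ring

lemma X_sub_C_natCast_ne_zero (i : Fin (n + 1)) (j : ℕ) :
    (X i - C (j : ℂ) : MvPolynomial (Fin (n + 1)) ℂ) ≠ 0 := fun hj => by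
  simpa using congrArg (eval fun _ => (j : ℂ) + 1) hj

lemma le_totalDegree_prod_X_sub_C (m : ℕ) (i : Fin (n + 1)) :
    m ≤ (∏ j ∈ Finset.range m, (X i - C (j : ℂ) : MvPolynomial (Fin (n + 1)) ℂ)).totalDegree := by
  induction m with
  | zero => exact Nat.zero_le _
  | succ m ih =>
    have h1 : 1 ≤ (X i - C (m : ℂ) : MvPolynomial (Fin (n + 1)) ℂ).totalDegree := by
      have := le_totalDegree (p := (X i - C (m : ℂ) : MvPolynomial (Fin (n + 1)) ℂ))
        (s := Finsupp.single i 1) (by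
          rw [mem_support_iff, coeff_sub, coeff_C,
            if_neg (Finsupp.single_ne_zero.mpr one_ne_zero).symm]
          simp)
      simpa using this
    rw [Finset.prod_range_succ, totalDegree_mul_of_isDomain
      (Finset.prod_ne_zero_iff.mpr fun j _ => X_sub_C_natCast_ne_zero i j)
      (X_sub_C_natCast_ne_zero i m)]
    exact Nat.add_le_add ih h1

/-- A form of degree `k` vanishing on the grid `{0, …, m - 1}^n` is a combination of the forms
`fallingForm m i` with homogeneous coefficients of degree `k - m`. -/
lemma exists_eq_sum_fallingForm_mul {m k : ℕ} (hm : m ≠ 0) {f : MvPolynomial (Fin (n + 1)) ℂ}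
    (hf : f.IsHomogeneous k) (hmk : m ≤ k)
    (h0 : ∀ a : Fin n → ℕ, (∀ i, a i < m) → eval (latticePoint a) f = 0) :
    ∃ q : Fin n → MvPolynomial (Fin (n + 1)) ℂ, (∀ i, (q i).IsHomogeneous (k - m)) ∧
      f = ∑ i, fallingForm m i * q i := by
  classical
  let S : Fin (n + 1) → Finset ℂ :=
    Fin.cons {1} fun _ => (Finset.range m).image fun j : ℕ => (j : ℂ)
  obtain ⟨h, hdeg, hsum⟩ := combinatorial_nullstellensatz_exists_linearCombination S
    (fun i => by
      refine Fin.cases ?_ (fun i => ?_) i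
      · simp [S]
      · simpa [S] using hm) f
    (fun x hx => by
      have hx0 : x 0 = 1 := by simpa [S] using hx 0
      have hxs : ∀ i : Fin n, ∃ j : ℕ, j < m ∧ (j : ℂ) = x i.succ := fun i => by
        simpa [S] using hx i.succ
      choose a ham hax using hxs
      have : x = latticePoint a := by
        ext i
        refine Fin.cases ?_ (fun i => ?_) i
        · simp [latticePoint, hx0]
        · simp [latticePoint, hax]
      rw [this]
      exact h0 a ham)
  have hS : ∀ i : Fin n, ∏ s ∈ S i.succ, (X i.succ - C s) =
      ∏ j ∈ Finset.range m, (X i.succ - C (j : ℂ) : MvPolynomial (Fin (n + 1)) ℂ) := fun i => by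
    simp only [S, Fin.cons_succ]
    exact Finset.prod_image fun _ _ _ _ h => Nat.cast_injective h
  have hdeg' : ∀ i : Fin n, (h i.succ).totalDegree ≤ k - m := by
    intro i
    by_cases hi : h i.succ = 0
    · simp [hi]
    have h1 := (hdeg i.succ).trans hf.totalDegree_le
    rw [hS, totalDegree_mul_of_isDomain (Finset.prod_ne_zero_iff.mpr fun j _ =>
      X_sub_C_natCast_ne_zero i.succ j) hi] at h1
    have h2 := le_totalDegree_prod_X_sub_C m i.succ
    omega
  choose q hq hqe using fun i => exists_homogenization (hdeg' i)
  refine ⟨q, hq, ?_⟩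
  have hX : (X 0 : MvPolynomial (Fin (n + 1)) ℂ) ≠ 0 := X_ne_zero 0
  refine mul_left_cancel₀ hX (MvPolynomial.funext fun y => ?_)
  rw [map_mul, map_mul, eval_X]
  by_cases hy : y 0 = 0
  · rw [hy, zero_mul, zero_mul]
  congr 1
  have h1 := eval_smul_of_isHomogeneous hf (y 0) ((y 0)⁻¹ • y)
  rw [smul_inv_smul₀ hy] at h1
  rw [h1, hsum, Finsupp.linearCombination_apply, Finsupp.sum_fintype _ _ (by simp),
    map_sum, map_sum, Fin.sum_univ_succ, mul_add, Finset.mul_sum]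
  have h2 : y 0 ^ k * eval ((y 0)⁻¹ • y) (h 0 • ∏ s ∈ S 0, (X 0 - C s)) = 0 := by
    simp [S, hy]
  rw [h2, zero_add]
  refine Finset.sum_congr rfl fun i _ => ?_
  have h3 := eval_smul_of_isHomogeneous (isHomogeneous_fallingForm m i) (y 0) ((y 0)⁻¹ • y)
  rw [smul_inv_smul₀ hy] at h3
  rw [hS, map_mul, h3, hqe i y hy, smul_eq_mul, map_mul, ← Nat.add_sub_cancel' hmk, pow_add,
    Nat.add_sub_cancel_left]
  simp only [fallingForm, map_prod, map_sub, map_mul, eval_X, eval_C, Pi.smul_apply, smul_eq_mul,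
    inv_mul_cancel₀ hy, mul_one]
  ring

end LatticePoints

section SpecialPoints

variable {n r m : ℕ}

/-- The span in degree `m + t` of the products of `I_{Z,m}` with forms of degree `t`, together with
the products of the dual forms `e i` with `x_0 ^ t`. -/
noncomputable def idealDualSpan (m t : ℕ) (v : Fin r → Fin (n + 1) → ℂ)
    (e : Fin r → MvPolynomial (Fin (n + 1)) ℂ) : Submodule ℂ (MvPolynomial (Fin (n + 1)) ℂ) :=
  Submodule.span ℂ ({x | ∃ i, x = e i * X 0 ^ t} ∪
    {x | ∃ q g : MvPolynomial (Fin (n + 1)) ℂ, q.IsHomogeneous t ∧ g.IsHomogeneous m ∧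
      (∀ i, eval (v i) g = 0) ∧ x = q * g})

lemma dual_mul_mem_idealDualSpan {t : ℕ} (v : Fin r → Fin (n + 1) → ℂ)
    (e : Fin r → MvPolynomial (Fin (n + 1)) ℂ) (i : Fin r) :
    e i * X 0 ^ t ∈ idealDualSpan m t v e :=
  Submodule.subset_span (Or.inl ⟨i, rfl⟩)

lemma mul_mem_idealDualSpan {t : ℕ} {v : Fin r → Fin (n + 1) → ℂ}
    {e : Fin r → MvPolynomial (Fin (n + 1)) ℂ} {q g : MvPolynomial (Fin (n + 1)) ℂ}
    (hq : q.IsHomogeneous t) (hg : g.IsHomogeneous m) (hgv : ∀ i, eval (v i) g = 0) :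
    q * g ∈ idealDualSpan m t v e :=
  Submodule.subset_span (Or.inr ⟨q, g, hq, hg, hgv, rfl⟩)

lemma exists_dualForms_latticePoint {s : ℕ} {a : Fin r → Fin n → ℕ} (ha : Function.Injective a)
    (hs : ∀ i, ∑ l, a i l ≤ s) : ∃ e, DualForms s (fun i => latticePoint (a i)) e := by
  choose e he hev using fun i => exists_form_dual_latticePoint (hs i)
  exact ⟨e, he, fun i j => by rw [hev i _ (hs j)]; simp [ha.eq_iff]⟩

/-- The lattice points `a` with `0 ≤ a_i < m` and `1 ≤ |a| ≤ m`. -/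
def truncatedSimplex (n m : ℕ) : Finset (Fin n → ℕ) :=
  (Fintype.piFinset fun _ => Finset.range m).filter fun a => ∑ i, a i ∈ Finset.Ioc 0 m

lemma mem_truncatedSimplex {a : Fin n → ℕ} :
    a ∈ truncatedSimplex n m ↔ (∀ i, a i < m) ∧ ∑ i, a i ∈ Finset.Ioc 0 m := by
  simp [truncatedSimplex]

/-- For distinct points of the truncated simplex, `I_{Z,m}` generates `I_{Z,k}` in degree
`k = m + n * (m - 1)`. -/
lemma mem_idealDualSpan_of_truncatedSimplex (hm : m ≠ 0) {a : Fin r → Fin n → ℕ}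
    (ha : Function.Injective a) (haT : ∀ i, a i ∈ truncatedSimplex n m) :
    ∃ e, DualForms m (fun i => latticePoint (a i)) e ∧
      ∀ p : MvPolynomial (Fin (n + 1)) ℂ, p.IsHomogeneous (m + n * (m - 1)) →
        p ∈ idealDualSpan m (n * (m - 1)) (fun i => latticePoint (a i)) e := by
  classical
  set t := n * (m - 1) with ht
  have hT : ∀ b : truncatedSimplex n m, ∑ i, b.1 i ≤ m := fun b =>
    (Finset.mem_Ioc.mp (mem_truncatedSimplex.mp b.2).2).2
  choose E hE hEv using fun b : truncatedSimplex n m => exists_form_dual_latticePoint (hT b)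
  let e : Fin r → MvPolynomial (Fin (n + 1)) ℂ := fun i => E ⟨a i, haT i⟩
  refine ⟨e, ⟨fun i => hE _, fun i j => ?_⟩, fun p hp => ?_⟩
  · simp only [e]
    rw [hEv _ _ (hT ⟨a j, haT j⟩)]
    simp [ha.eq_iff]
  have hX0 : ∀ b : Fin n → ℕ, eval (latticePoint b) (X 0 : MvPolynomial (Fin (n + 1)) ℂ) = 1 :=
    fun b => by simp [latticePoint]
  let grid : Finset (Fin n → ℕ) := Fintype.piFinset fun _ => Finset.range m
  have hgrid : ∀ b : grid, ∑ i, b.1 i ≤ t := fun b => by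
    refine (Finset.sum_le_card_nsmul _ _ (m - 1) fun i _ => ?_).trans (by simp [ht])
    have := Finset.mem_range.mp (Fintype.mem_piFinset.mp b.2 i)
    omega
  choose F hF hFv using fun b : grid => exists_form_dual_latticePoint (hgrid b)
  let h := levelForm n (Finset.Ioc 0 m)
  have hh : h.IsHomogeneous m := by
    simpa using isHomogeneous_levelForm (n := n) (Finset.Ioc 0 m)
  let p₀ := ∑ b, eval (latticePoint b.1) p • (E b * X 0 ^ t)
  have hp₀ : p₀.IsHomogeneous (m + t) := IsHomogeneous.sum _ _ _ fun b _ =>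
    isHomogeneous_smul ((hE b).mul (isHomogeneous_X_pow 0 t)) _
  have hp₀v : ∀ b ∈ truncatedSimplex n m,
      eval (latticePoint b) p₀ = eval (latticePoint b) p := fun b hb => by
    have : ∀ c : truncatedSimplex n m, c.1 = b ↔ c = ⟨b, hb⟩ := fun c => by
      rw [Subtype.ext_iff]
    simp [p₀, smul_eval, hX0, hEv _ _ (hT ⟨b, hb⟩), this]
  let q := ∑ b, (eval (latticePoint b.1) (p - p₀) / eval (latticePoint b.1) h) • F b
  have hq : q.IsHomogeneous t := IsHomogeneous.sum _ _ _ fun b _ => isHomogeneous_smul (hF b) _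
  have hqv : ∀ b ∈ grid, eval (latticePoint b) q =
      eval (latticePoint b) (p - p₀) / eval (latticePoint b) h := fun b hb => by
    have : ∀ c : grid, c.1 = b ↔ c = ⟨b, hb⟩ := fun c => by rw [Subtype.ext_iff]
    simp [q, smul_eval, hFv _ _ (hgrid ⟨b, hb⟩), this]
  obtain ⟨g, hg, hsum⟩ := exists_eq_sum_fallingForm_mul (k := m + t) hm
    ((hp.sub hp₀).sub (hh.mul hq)) (Nat.le_add_right _ _) fun b hb => by
      have hbg : b ∈ grid := Fintype.mem_piFinset.mpr fun i => Finset.mem_range.mpr (hb i)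
      rw [map_sub, map_mul, hqv b hbg]
      by_cases h0 : eval (latticePoint b) h = 0
      · have hbT : b ∈ truncatedSimplex n m :=
          mem_truncatedSimplex.mpr ⟨hb, (eval_levelForm _ _).mp h0⟩
        rw [map_sub, hp₀v b hbT, h0]
        simp
      · rw [mul_div_cancel₀ _ h0, sub_self]
  have hpeq : p = p₀ + q * h + ∑ i, g i * fallingForm m i := by
    have : p - p₀ - h * q = ∑ i, g i * fallingForm m i := by
      rw [hsum]; exact Finset.sum_congr rfl fun i _ => mul_comm _ _
    linear_combination this
  rw [hpeq]
  refine add_mem (add_mem (Submodule.sum_mem _ fun b _ => Submodule.smul_mem _ _ ?_) ?_)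
    (Submodule.sum_mem _ fun i _ => ?_)
  · by_cases hb : ∃ i, a i = b.1
    · obtain ⟨i, hi⟩ := hb
      have : E b = e i := by simp only [e]; congr 1; exact Subtype.ext hi.symm
      rw [this]
      exact dual_mul_mem_idealDualSpan _ _ i
    · rw [mul_comm]
      refine mul_mem_idealDualSpan (isHomogeneous_X_pow 0 t) (hE b) fun i => ?_
      rw [hEv _ _ (hT ⟨a i, haT i⟩), if_neg fun h => hb ⟨i, h.symm⟩]
  · exact mul_mem_idealDualSpan hq hh fun i =>
      (eval_levelForm _ _).mpr (mem_truncatedSimplex.mp (haT i)).2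
  · have := hg i
    rw [Nat.add_sub_cancel_left] at this
    exact mul_mem_idealDualSpan this (isHomogeneous_fallingForm m i) fun j =>
      (eval_fallingForm m i _).mpr ((mem_truncatedSimplex.mp (haT j)).1 i)

/-- The lattice points `a` with `|a| ≤ m`. -/
def latticeSimplex (n m : ℕ) : Finset (Fin n → ℕ) :=
  (Fintype.piFinset fun _ => Finset.range (m + 1)).filter fun a => ∑ i, a i ≤ m

lemma mem_latticeSimplex {a : Fin n → ℕ} : a ∈ latticeSimplex n m ↔ ∑ i, a i ≤ m := by
  simp only [latticeSimplex, Finset.mem_filter, Fintype.mem_piFinset, Finset.mem_range,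
    and_iff_right_iff_imp]
  exact fun h i => Nat.lt_succ_of_le
    ((Finset.single_le_sum (fun _ _ => Nat.zero_le _) (Finset.mem_univ i)).trans h)

lemma card_latticeSimplex (n m : ℕ) : (latticeSimplex n m).card = (n + m).choose n := by
  have h : (latticeSimplex n m).card =
      (Finset.finsuppAntidiag (Finset.univ : Finset (Fin (n + 1))) m).card := by
    refine Finset.card_bij' (fun a _ => Finsupp.equivFunOnFinite.symm (Fin.cons (m - ∑ i, a i) a))
      (fun b _ => fun i => b i.succ) ?_ ?_ ?_ ?_
    · intro a ha
      have := mem_latticeSimplex.mp ha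
      simp [Finset.mem_finsuppAntidiag, Fin.sum_univ_succ, this]
    · intro b hb
      have := (Finset.mem_finsuppAntidiag.mp hb).1
      rw [Fin.sum_univ_succ] at this
      exact mem_latticeSimplex.mpr (by omega)
    · intro a _
      ext i
      simp
    · intro b hb
      have := (Finset.mem_finsuppAntidiag.mp hb).1
      rw [Fin.sum_univ_succ] at this
      ext i
      refine Fin.cases ?_ (fun i => ?_) i
      · simp; omega
      · simp
  rw [h, Finset.card_finsuppAntidiag_nat_eq_choose, Finset.card_univ, Fintype.card_fin,
    show n + 1 + m - 1 = n + m by omega, Nat.choose_symm_add]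

lemma le_card_truncatedSimplex (n m : ℕ) :
    (n + m).choose n - n - 1 ≤ (truncatedSimplex n m).card := by
  classical
  have hsub : latticeSimplex n m ⊆
      truncatedSimplex n m ∪ insert 0 (Finset.univ.image fun i : Fin n => Pi.single i m) := by
    intro a ha
    have hle := mem_latticeSimplex.mp ha
    by_cases h0 : a = 0
    · simp [h0]
    by_cases hlt : ∀ i, a i < m
    · refine Finset.mem_union_left _ (mem_truncatedSimplex.mpr ⟨hlt, Finset.mem_Ioc.mpr ⟨?_, hle⟩⟩)
      refine Nat.pos_of_ne_zero fun hs => h0 (funext fun i => ?_)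
      exact Finset.sum_eq_zero_iff.mp hs i (Finset.mem_univ i)
    · push Not at hlt
      obtain ⟨i, hi⟩ := hlt
      refine Finset.mem_union_right _ (Finset.mem_insert_of_mem (Finset.mem_image.mpr
        ⟨i, Finset.mem_univ i, ?_⟩))
      have hs := Finset.add_sum_erase Finset.univ a (Finset.mem_univ i)
      have hz : ∑ j ∈ Finset.univ.erase i, a j = 0 := by omega
      ext j
      by_cases hj : j = i
      · subst hj
        rw [Pi.single_eq_same]
        omega
      · rw [Pi.single_eq_of_ne hj]
        exact (Finset.sum_eq_zero_iff.mp hz j (Finset.mem_erase.mpr ⟨hj, Finset.mem_univ j⟩)).symm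
  have h1 := (Finset.card_le_card hsub).trans (Finset.card_union_le _ _)
  have h2 := Finset.card_insert_le (0 : Fin n → ℕ)
    (Finset.univ.image fun i : Fin n => Pi.single i m)
  have h3 : (Finset.univ.image fun i : Fin n => (Pi.single i m : Fin n → ℕ)).card ≤ n := by
    simpa using Finset.card_image_le (s := Finset.univ)
      (f := fun i : Fin n => (Pi.single i m : Fin n → ℕ))
  rw [card_latticeSimplex] at h1
  omega

lemma exists_injective_mem_finset {α : Type*} {s : Finset α} (h : r ≤ s.card) :
    ∃ a : Fin r → α, Function.Injective a ∧ ∀ i, a i ∈ s :=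
  ⟨fun i => (s.equivFin.symm (Fin.castLE h i)).1,
    fun _ _ hij => Fin.castLE_injective h (s.equivFin.symm.injective (Subtype.ext hij)),
    fun i => (s.equivFin.symm (Fin.castLE h i)).2⟩

end SpecialPoints

section Generic

variable {n r m t : ℕ}

/-- The value at the tuple `v` of a polynomial in the coordinates of `r` vectors. -/
noncomputable def evalTuple (v : Fin r → Fin (n + 1) → ℂ) :
    MvPolynomial (Fin r × Fin (n + 1)) ℂ →+* ℂ :=
  eval fun q => v q.1 q.2

/-- The value of `p` at the `i`-th vector of a tuple, as a polynomial in the tuple. -/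
noncomputable def atVector (i : Fin r) (p : MvPolynomial (Fin (n + 1)) ℂ) :
    MvPolynomial (Fin r × Fin (n + 1)) ℂ :=
  rename (fun l => (i, l)) p

lemma evalTuple_atVector (v : Fin r → Fin (n + 1) → ℂ) (i : Fin r)
    (p : MvPolynomial (Fin (n + 1)) ℂ) : evalTuple v (atVector i p) = eval (v i) p := by
  rw [evalTuple, atVector, eval_rename]
  rfl

/-- The matrix of the values of the forms `e i` at the vectors of a tuple. -/
noncomputable def valueMatrix (e : Fin r → MvPolynomial (Fin (n + 1)) ℂ) :
    Matrix (Fin r) (Fin r) (MvPolynomial (Fin r × Fin (n + 1)) ℂ) :=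
  Matrix.of fun i j => atVector j (e i)

lemma evalTuple_valueMatrix (v : Fin r → Fin (n + 1) → ℂ)
    (e : Fin r → MvPolynomial (Fin (n + 1)) ℂ) :
    (evalTuple v).mapMatrix (valueMatrix e) = Matrix.of fun i j => eval (v j) (e i) := by
  ext i j
  simp [valueMatrix, evalTuple_atVector]

lemma evalTuple_det_valueMatrix {v : Fin r → Fin (n + 1) → ℂ}
    {e : Fin r → MvPolynomial (Fin (n + 1)) ℂ} (he : DualForms m v e) :
    evalTuple v (valueMatrix e).det = 1 := by
  have h : (Matrix.of fun i j => eval (v j) (e i)) = (1 : Matrix (Fin r) (Fin r) ℂ) := by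
    ext i j
    simp [he.eval_eq, Matrix.one_apply]
  rw [RingHom.map_det, evalTuple_valueMatrix, h, Matrix.det_one]

lemma exists_dualForms_of_det_ne_zero {v : Fin r → Fin (n + 1) → ℂ}
    {e : Fin r → MvPolynomial (Fin (n + 1)) ℂ} (he : ∀ i, (e i).IsHomogeneous m)
    (hdet : evalTuple v (valueMatrix e).det ≠ 0) : ∃ e', DualForms m v e' := by
  rw [RingHom.map_det, evalTuple_valueMatrix] at hdet
  set A : Matrix (Fin r) (Fin r) ℂ := Matrix.of fun i j => eval (v j) (e i) with hA
  refine ⟨fun i => ∑ l, A⁻¹ i l • e l, fun i => IsHomogeneous.sum _ _ _ fun l _ =>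
    isHomogeneous_smul (he l) _, fun i j => ?_⟩
  have h := congrFun (congrFun (Matrix.nonsing_inv_mul A (isUnit_iff_ne_zero.mpr hdet)) i) j
  rw [Matrix.mul_apply, Matrix.one_apply] at h
  simpa [smul_eval, hA] using h

lemma mem_baseLocus_self (v : Fin r → Fin (n + 1) → ℂ) (i : Fin r) : v i ∈ baseLocus m v :=
  fun _ _ h => h i

/-- An element of `idealDualSpan` at `v₀` extends to a family, polynomial in the tuple `v`, of
forms that agree on the base locus of `I_{Z,m}` with a combination of the `e i * x_0 ^ t`. -/
lemma exists_polynomial_family {v₀ : Fin r → Fin (n + 1) → ℂ}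
    {e : Fin r → MvPolynomial (Fin (n + 1)) ℂ} (he : DualForms m v₀ e)
    {p : MvPolynomial (Fin (n + 1)) ℂ} (hp : p ∈ idealDualSpan m t v₀ e) :
    ∃ F : (Fin r → Fin (n + 1) → ℂ) → MvPolynomial (Fin (n + 1)) ℂ,
      (∀ ν, ∃ P, ∀ v, coeff ν (F v) = evalTuple v P) ∧ F v₀ = p ∧
      ∀ v, (F v).IsHomogeneous (m + t) ∧ ∃ a : Fin r → ℂ, ∀ w ∈ baseLocus m v,
        eval w (F v) = eval w ((∑ i, a i • e i) * X 0 ^ t) := by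
  classical
  induction hp using Submodule.span_induction with
  | mem x hx =>
    rcases hx with ⟨i, rfl⟩ | ⟨q, g, hq, hg, hgv, rfl⟩
    · refine ⟨fun _ => e i * X 0 ^ t, fun ν => ⟨C (coeff ν (e i * X 0 ^ t)), fun v => ?_⟩, rfl,
        fun v => ⟨(he.isHomogeneous i).mul (isHomogeneous_X_pow 0 t), Pi.single i 1,
          fun w _ => ?_⟩⟩
      · simp [evalTuple]
      · simp [Pi.single_apply]
    · let A := valueMatrix e
      let G : (Fin r → Fin (n + 1) → ℂ) → MvPolynomial (Fin (n + 1)) ℂ := fun v =>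
        evalTuple v A.det • g -
          ∑ i, ∑ l, (eval (v i) g * evalTuple v (A.adjugate i l)) • e l
      have hG : ∀ v, (G v).IsHomogeneous m := fun v =>
        (isHomogeneous_smul hg _).sub (IsHomogeneous.sum _ _ _ fun i _ =>
          IsHomogeneous.sum _ _ _ fun l _ => isHomogeneous_smul (he.isHomogeneous l) _)
      have hGv : ∀ v j, eval (v j) (G v) = 0 := by
        intro v j
        have hadj : ∀ i, ∑ l, evalTuple v (A.adjugate i l) * eval (v j) (e l) =
            if i = j then evalTuple v A.det else 0 := by
          intro i
          have h := congrArg (evalTuple v)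
            (congrFun (congrFun (Matrix.adjugate_mul A) i) j)
          rw [Matrix.mul_apply, map_sum] at h
          simpa [A, valueMatrix, evalTuple_atVector, Matrix.one_apply, apply_ite] using h
        simp only [G, map_sub, map_sum, smul_eval, mul_assoc, ← Finset.mul_sum, hadj]
        simp [mul_comm]
      refine ⟨fun v => q * G v, fun ν => ⟨A.det * C (coeff ν (q * g)) -
        ∑ i, ∑ l, atVector i g * A.adjugate i l * C (coeff ν (q * e l)), fun v => ?_⟩, ?_,
        fun v => ⟨?_, 0, fun w hw => ?_⟩⟩
      · have hC : ∀ c : ℂ, evalTuple (n := n) v (C c) = c := fun c => by simp [evalTuple]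
        simp only [G, mul_sub, Finset.mul_sum, coeff_sub, coeff_sum, mul_smul_comm, coeff_smul,
          map_sub, map_mul, map_sum, hC, evalTuple_atVector, smul_eq_mul]
      · simp [G, hgv, A, evalTuple_det_valueMatrix he]
      · rw [add_comm m t]; exact hq.mul (hG v)
      · simp [hw (G v) (hG v) (hGv v)]
  | zero =>
    exact ⟨0, fun ν => ⟨0, by simp⟩, rfl, fun v => ⟨isHomogeneous_zero _ _ _, 0, by simp⟩⟩
  | add x y _ _ ihx ihy =>
    obtain ⟨F, hF, hF0, hFv⟩ := ihx
    obtain ⟨G, hG, hG0, hGv⟩ := ihy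
    refine ⟨F + G, fun ν => ?_, by simp [hF0, hG0], fun v => ⟨(hFv v).1.add (hGv v).1, ?_⟩⟩
    · obtain ⟨P, hP⟩ := hF ν
      obtain ⟨Q, hQ⟩ := hG ν
      exact ⟨P + Q, fun v => by simp [hP, hQ]⟩
    · obtain ⟨a, ha⟩ := (hFv v).2
      obtain ⟨b, hb⟩ := (hGv v).2
      refine ⟨a + b, fun w hw => ?_⟩
      rw [Pi.add_apply, map_add, ha w hw, hb w hw, ← map_add, ← add_mul, ← Finset.sum_add_distrib]
      simp only [Pi.add_apply, add_smul]
  | smul c x _ ih =>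
    obtain ⟨F, hF, hF0, hFv⟩ := ih
    refine ⟨c • F, fun ν => ?_, by simp [hF0], fun v => ⟨isHomogeneous_smul (hFv v).1 c, ?_⟩⟩
    · obtain ⟨P, hP⟩ := hF ν
      exact ⟨C c * P, fun v => by simp [hP, evalTuple]⟩
    · obtain ⟨a, ha⟩ := (hFv v).2
      refine ⟨c • a, fun w hw => ?_⟩
      rw [Pi.smul_apply, smul_eval, ha w hw, ← smul_eval, ← smul_mul_assoc, Finset.smul_sum]
      simp only [Pi.smul_apply, smul_assoc]

/-- If `idealDualSpan` at `v₀` contains all forms of degree `m + t`, then for a general tuple the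
base locus of `I_{Z,m}` lies in that of `I_{Z,m+t}`. -/
lemma exists_generic_baseLocus_subset {v₀ : Fin r → Fin (n + 1) → ℂ}
    {e : Fin r → MvPolynomial (Fin (n + 1)) ℂ} (he : DualForms m v₀ e) (hv₀ : ∀ i, v₀ i 0 ≠ 0)
    (hspan : ∀ p : MvPolynomial (Fin (n + 1)) ℂ, p.IsHomogeneous (m + t) →
      p ∈ idealDualSpan m t v₀ e) :
    ∃ D : MvPolynomial (Fin r × Fin (n + 1)) ℂ, D ≠ 0 ∧ ∀ v, evalTuple v D ≠ 0 →
      (∃ e', DualForms m v e') ∧ baseLocus m v ⊆ baseLocus (m + t) v := by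
  classical
  let κ := Finset.finsuppAntidiag (Finset.univ : Finset (Fin (n + 1))) (m + t)
  have hκ : ∀ ν : Fin (n + 1) →₀ ℕ, ν ∈ κ ↔ ν.degree = m + t := fun ν => by
    simp [κ, Finset.mem_finsuppAntidiag, Finsupp.degree_eq_sum]
  choose F hF hF0 hFv using fun ν : κ => exists_polynomial_family he
    (hspan (monomial ν.1 1) (isHomogeneous_monomial 1 ((hκ ν.1).mp ν.2)))
  choose P hP using hF
  let Φ : Matrix κ κ (MvPolynomial (Fin r × Fin (n + 1)) ℂ) := Matrix.of fun ν μ => P ν μ.1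
  have hΦ : ∀ v, (evalTuple v).mapMatrix Φ = Matrix.of fun ν μ : κ => coeff μ.1 (F ν v) := by
    intro v
    ext ν μ
    simp [Φ, hP]
  refine ⟨(valueMatrix e).det * (∏ i, X (i, 0)) * Φ.det, fun h => ?_, fun v hv => ?_⟩
  · have h1 := congrArg (evalTuple v₀) h
    have h2 : (Matrix.of fun ν μ : κ => coeff μ.1 (F ν v₀)) = (1 : Matrix κ κ ℂ) := by
      ext ν μ
      simp [hF0, coeff_monomial, Matrix.one_apply]
    rw [map_mul, map_mul, evalTuple_det_valueMatrix he, RingHom.map_det, hΦ, h2] at h1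
    simp [evalTuple, Finset.prod_eq_zero_iff, hv₀] at h1
  simp only [map_mul, mul_ne_zero_iff, map_prod, Finset.prod_ne_zero_iff] at hv
  obtain ⟨⟨hdet, hX⟩, hΦdet⟩ := hv
  refine ⟨exists_dualForms_of_det_ne_zero he.isHomogeneous hdet, fun w hw p hp hpv => ?_⟩
  rw [RingHom.map_det, hΦ] at hΦdet
  set B : Matrix κ κ ℂ := Matrix.of fun ν μ => coeff μ.1 (F ν v) with hB
  let a : κ → ℂ := Matrix.vecMul (fun μ => coeff μ.1 p) B⁻¹
  have hpa : p = ∑ ν, a ν • F ν v := by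
    ext μ
    by_cases hμ : μ ∈ κ
    · have h1 : Matrix.vecMul a B = fun μ => coeff μ.1 p := by
        rw [Matrix.vecMul_vecMul, Matrix.nonsing_inv_mul B (isUnit_iff_ne_zero.mpr hΦdet),
          Matrix.vecMul_one]
      have h2 := congrFun h1 ⟨μ, hμ⟩
      simp only [Matrix.vecMul, dotProduct, hB, Matrix.of_apply] at h2
      simp only [coeff_sum, coeff_smul, smul_eq_mul, h2]
    · have hμ' : μ.degree ≠ m + t := fun h => hμ ((hκ μ).mpr h)
      simp [coeff_sum, hp.coeff_eq_zero hμ', fun ν => (hFv ν v).1.coeff_eq_zero hμ']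
  choose b hb using fun ν => (hFv ν v).2
  let c : Fin r → ℂ := fun i => ∑ ν, a ν * b ν i
  have hpc : ∀ u ∈ baseLocus m v, eval u p = eval u (∑ i, c i • e i) * u 0 ^ t := by
    intro u hu
    rw [hpa, map_sum]
    simp only [smul_eval, hb _ u hu, map_mul, map_pow, eval_X, map_sum, c, Finset.sum_mul,
      Finset.mul_sum]
    rw [Finset.sum_comm]
    exact Finset.sum_congr rfl fun i _ => Finset.sum_congr rfl fun ν _ => by ring
  have hc : c = 0 := by
    rw [RingHom.map_det, evalTuple_valueMatrix] at hdet
    refine Matrix.eq_zero_of_vecMul_eq_zero hdet (funext fun j => ?_)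
    have h1 := hpc (v j) (mem_baseLocus_self v j)
    have h2 : v j 0 ^ t ≠ 0 := pow_ne_zero _ (by simpa [evalTuple] using hX j (Finset.mem_univ j))
    rw [hpv, eq_comm, mul_eq_zero, or_iff_left h2] at h1
    simpa [Matrix.vecMul, dotProduct, smul_eval] using h1
  rw [hpc w hw, hc]
  simp

end Generic

/-- **Improved Iarrobino–Kanev bound** (Theorem 2.5): with `m = ⌈d/2⌉`, if
`r ≤ binom(n+m,n) − n − 1` (`d` even) or `r ≤ binom(n+m−1,n)` (`d` odd), then for a
general tuple `(v_1,…,v_r)`, with `f = Σ v_i^d` and `Z = {v_1,…,v_r}`: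
(a) `ker C_f^m = I_{Z,m}`;
(b) the common zero locus of `I_{Z,m}` is exactly `{[v_1],…,[v_r]}`;
(c) `f` has symmetric rank `r` with unique Waring decomposition. -/
theorem statement4 (n d r : ℕ) (hn : 1 ≤ n) (hd : 3 ≤ d)
    (hre : Even d → r ≤ Nat.choose (n + (d + 1) / 2) n - n - 1)
    (hro : Odd d → r ≤ Nat.choose (n + (d + 1) / 2 - 1) n) :
    ∃ D : MvPolynomial (Fin r × Fin (n+1)) ℂ, D ≠ 0 ∧
      ∀ v : Fin r → Fin (n+1) → ℂ,
        MvPolynomial.eval (fun q => v q.1 q.2) D ≠ 0 →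
        (∀ p : MvPolynomial (Fin (n+1)) ℂ, p.IsHomogeneous ((d + 1) / 2) →
          (diffOp p (∑ i, (linForm (n+1) (v i)) ^ d) = 0 ↔
            ∀ i, MvPolynomial.eval (v i) p = 0)) ∧
        (∀ w : Fin (n+1) → ℂ, w ≠ 0 →
          ((∀ p : MvPolynomial (Fin (n+1)) ℂ, p.IsHomogeneous ((d + 1) / 2) →
              (∀ i, MvPolynomial.eval (v i) p = 0) → MvPolynomial.eval w p = 0) ↔
            ∃ i, ∃ lam : ℂ, w = lam • v i)) ∧
        waringRank n d (∑ i, (linForm (n+1) (v i)) ^ d) = r ∧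
        UniqueDecomp n d r (∑ i, (linForm (n+1) (v i)) ^ d) (fun _ => 1) v := by
  have hmd : (d + 1) / 2 ≤ d := by omega
  suffices h : ∃ D : MvPolynomial (Fin r × Fin (n + 1)) ℂ, D ≠ 0 ∧ ∀ v, evalTuple v D ≠ 0 →
      (∃ e, DualForms ((d + 1) / 2) v e) ∧ (∃ e, DualForms (d - (d + 1) / 2) v e) ∧
      ∀ w ∈ baseLocus ((d + 1) / 2) v, w ≠ 0 → ∃ i, ∃ c : ℂ, w = c • v i by
    obtain ⟨D, hD, h⟩ := h
    refine ⟨D, hD, fun v hv => ?_⟩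
    obtain ⟨⟨e, he⟩, ⟨e', he'⟩, hb⟩ := h v hv
    refine ⟨fun p hp => diffOp_sum_linForm_pow_eq_zero_iff he' hmd hp,
      fun w hw => ⟨fun h => hb w h hw, ?_⟩,
      waringRank_eq he he' hmd (he.ne_zero (by omega)), uniqueDecomp_of_baseLocus he he' hmd hb⟩
    rintro ⟨i, c, rfl⟩ p hp hpv
    rw [eval_smul_of_isHomogeneous hp, hpv, mul_zero]
  rcases Nat.even_or_odd d with hde | hdo
  · obtain ⟨m, rfl⟩ := hde
    have hm : (m + m + 1) / 2 = m := by omega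
    rw [hm] at hre ⊢
    obtain ⟨a, ha, haT⟩ := exists_injective_mem_finset
      ((hre ⟨m, rfl⟩).trans (le_card_truncatedSimplex n m))
    obtain ⟨e, he, hspan⟩ := mem_idealDualSpan_of_truncatedSimplex (by omega) ha haT
    obtain ⟨D, hD, h⟩ := exists_generic_baseLocus_subset he (by simp [latticePoint]) hspan
    refine ⟨D, hD, fun v hv => ?_⟩
    obtain ⟨⟨e', he'⟩, hsub⟩ := h v hv
    have hv0 := he'.ne_zero (by omega)
    refine ⟨⟨e', he'⟩, ⟨e', by rwa [Nat.add_sub_cancel]⟩, fun w hw hw0 => ?_⟩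
    obtain ⟨e'', he''⟩ := he'.exists_add hv0 (n * (m - 1) - 1)
    have ht : 0 < n * (m - 1) := Nat.mul_pos hn (by omega)
    refine he''.mem_baseLocus_succ hv0 hw0 ?_
    rw [add_assoc, Nat.sub_add_cancel ht]
    exact hsub hw
  · obtain ⟨s, rfl⟩ := hdo
    have hm : (2 * s + 1 + 1) / 2 = s + 1 := by omega
    have hs : 2 * s + 1 - (s + 1) = s := by omega
    rw [hm] at hro ⊢
    rw [hs]
    have hr : r ≤ (latticeSimplex n s).card := by
      rw [card_latticeSimplex]
      exact hro ⟨s, rfl⟩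
    obtain ⟨a, ha, haT⟩ := exists_injective_mem_finset hr
    obtain ⟨e, he⟩ := exists_dualForms_latticePoint ha fun i => mem_latticeSimplex.mp (haT i)
    refine ⟨(valueMatrix e).det, fun h => ?_, fun v hv => ?_⟩
    · have := evalTuple_det_valueMatrix he
      simp [h] at this
    · obtain ⟨e', he'⟩ := exists_dualForms_of_det_ne_zero he.isHomogeneous hv
      have hv0 := he'.ne_zero (by omega)
      exact ⟨he'.exists_add hv0 1, ⟨e', he'⟩, fun w hw hw0 => he'.mem_baseLocus_succ hv0 hw0 hw⟩
end

section
/- Let m ≥ 1 and let g, h ∈ ℂ[x_0,x_1,x_2] be homogeneous of degree m whose common zero locus in P² consists of exactly m² distinct points [v_1],…,[v_{m²}] (a transverse complete intersection). Then the evaluation map sending a homogeneous polynomial p of degree 2m to (p(v_1),…,p(v_{m²})) ∈ ℂ^{m²} is surjective; equivalently, the powers ℓ_{v_1}^{2m},…,ℓ_{v_{m²}}^{2m} are linearly independent in the space of homogeneous polynomials of degree 2m. -/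
open MvPolynomial

/-- The value at `(1, 0)` of the homogenization of `p` in degree `n` is the `n`-th coefficient. -/
lemma Polynomial.eval_homogenize_one_zero {R : Type*} [CommSemiring R] (p : Polynomial R) (n : ℕ) :
    MvPolynomial.eval ![1, 0] (p.homogenize n) = p.coeff n := by
  rw [Polynomial.homogenize, map_sum, Finset.sum_eq_single (n, 0)]
  · simp [Finsupp.update_eq_add_single, MvPolynomial.eval_monomial]
  · rintro ⟨a, b⟩ hab hne
    have hb : b ≠ 0 := by
      rintro rfl
      simp_all
    simp [Finsupp.update_eq_add_single, MvPolynomial.eval_monomial, Finsupp.prod_fintype, hb]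
  · simp

/-- Homogenizing the dehomogenization of a binary form gives back the form. -/
lemma MvPolynomial.IsHomogeneous.exists_homogenize_eq {R : Type*} [CommSemiring R]
    {q : MvPolynomial (Fin 2) R} {n : ℕ} (hq : q.IsHomogeneous n) :
    ∃ p : Polynomial R, p.natDegree ≤ n ∧ p.homogenize n = q := by
  refine ⟨MvPolynomial.aeval ![Polynomial.X, 1] q, ?_, Polynomial.homogenize_eq_of_isHomogeneous hq rfl⟩
  simpa using aeval_natDegree_le q hq.totalDegree_le ![Polynomial.X, 1] (n := 1) (by
    intro i
    fin_cases i
    · exact Polynomial.natDegree_X_le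
    · simp)

/-- Bézout's identity with the expected degree bounds. -/
lemma Polynomial.exists_mul_add_mul_eq_of_isCoprime {K : Type*} [Field K] {m e : ℕ}
    {G H Q : Polynomial K} (hm : 1 ≤ m) (hme : 2 * m ≤ e + 1) (hGH : IsCoprime G H)
    (hG : G.natDegree = m) (hH : H.natDegree ≤ m) (hQ : Q.natDegree ≤ e) :
    ∃ A B : Polynomial K, A.natDegree ≤ e - m ∧ B.natDegree ≤ e - m ∧ A * G + B * H = Q := by
  obtain ⟨a, b, hab⟩ := hGH
  have hB : (Q * b % G).natDegree < m := by
    simpa [hG] using Polynomial.natDegree_mod_lt (Q * b) (q := G) (by lia)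
  have hsum : (Q * a + Q * b / G * H) * G + Q * b % G * H = Q := by
    linear_combination Q * hab + H * EuclideanDomain.div_add_mod (Q * b) G
  refine ⟨Q * a + Q * b / G * H, Q * b % G, ?_, by lia, hsum⟩
  generalize Q * a + Q * b / G * H = A at hsum ⊢
  generalize Q * b % G = B at hB hsum
  rcases eq_or_ne A 0 with rfl | hA
  · simp
  have hG0 : G ≠ 0 := by
    rintro rfl
    simp at hG
    lia
  have hdeg : (A * G).natDegree ≤ e := by
    rw [eq_sub_of_add_eq hsum]
    refine (Polynomial.natDegree_sub_le _ _).trans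
      (max_le hQ (Polynomial.natDegree_mul_le.trans ?_))
    lia
  rw [Polynomial.natDegree_mul hA hG0] at hdeg
  lia

/-- If two binary forms of degree `m` have no common zero, and the first one does not vanish at
`(1, 0)`, then every form of degree at least `2 * m - 1` lies in the ideal they generate. -/
lemma mem_span_pair_of_eval_one_zero_ne_zero {K : Type*} [Field K] [IsAlgClosed K] {m e : ℕ}
    {G H Q : MvPolynomial (Fin 2) K} (hm : 1 ≤ m) (hme : 2 * m ≤ e + 1)
    (hG : G.IsHomogeneous m) (hH : H.IsHomogeneous m) (hQ : Q.IsHomogeneous e)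
    (hGH : ∀ w : Fin 2 → K, w ≠ 0 → eval w G = 0 → eval w H ≠ 0)
    (hG1 : eval ![1, 0] G ≠ 0) : Q ∈ Ideal.span {G, H} := by
  obtain ⟨G, hGd, rfl⟩ := hG.exists_homogenize_eq
  obtain ⟨H, hHd, rfl⟩ := hH.exists_homogenize_eq
  obtain ⟨Q, hQd, rfl⟩ := hQ.exists_homogenize_eq
  rw [Polynomial.eval_homogenize_one_zero] at hG1
  have hco : IsCoprime G H := by
    refine (Polynomial.isCoprime_iff_aeval_ne_zero_of_isAlgClosed K K G H).2 fun a ↦ ?_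
    rw [or_iff_not_imp_left, not_not]
    intro ha
    have key := hGH ![a, 1] (fun h0 ↦ by simpa using congrFun h0 1)
    rw [Polynomial.eval_homogenize hGd _ (by simp),
      Polynomial.eval_homogenize hHd _ (by simp)] at key
    simp only [Matrix.cons_val_zero, Matrix.cons_val_one, div_one, one_pow, mul_one] at key
    rw [Polynomial.coe_aeval_eq_eval] at ha ⊢
    exact key ha
  obtain ⟨A, B, hA, hB, rfl⟩ := Polynomial.exists_mul_add_mul_eq_of_isCoprime hm hme hco
    (le_antisymm hGd (Polynomial.le_natDegree_of_ne_zero hG1)) hHd hQd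
  rw [← Nat.sub_add_cancel (show m ≤ e by lia), Polynomial.homogenize_add,
    Polynomial.homogenize_mul _ _ hA hGd, Polynomial.homogenize_mul _ _ hB hHd]
  exact Ideal.mem_span_pair.2 ⟨_, _, rfl⟩

/-- If two binary forms of degree `m` have no common zero, then every form of degree at least
`2 * m - 1` lies in the ideal they generate. -/
lemma mem_span_pair_of_isHomogeneous {K : Type*} [Field K] [IsAlgClosed K] {m e : ℕ}
    {G H Q : MvPolynomial (Fin 2) K} (hm : 1 ≤ m) (hme : 2 * m ≤ e + 1)
    (hG : G.IsHomogeneous m) (hH : H.IsHomogeneous m) (hQ : Q.IsHomogeneous e)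
    (hGH : ∀ w : Fin 2 → K, w ≠ 0 → eval w G = 0 → eval w H ≠ 0) :
    Q ∈ Ideal.span {G, H} := by
  by_cases hG1 : eval ![1, 0] G = 0
  · rw [Set.pair_comm]
    refine mem_span_pair_of_eval_one_zero_ne_zero hm hme hH hG hQ
      (fun w hw h1 h2 ↦ hGH w hw h2 h1) (hGH _ (fun h0 ↦ ?_) hG1)
    simpa using congrFun h0 0
  · exact mem_span_pair_of_eval_one_zero_ne_zero hm hme hG hH hQ hGH hG1

section HomogeneousComponent

attribute [local instance] MvPolynomial.gradedAlgebra

lemma MvPolynomial.IsHomogeneous.homogeneousComponent_mul {σ R : Type*} [CommSemiring R]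
    {a : MvPolynomial σ R} {k : ℕ} (ha : a.IsHomogeneous k) (n : ℕ) (b : MvPolynomial σ R) :
    homogeneousComponent (k + n) (a * b) = a * homogeneousComponent n b := by
  rw [← decomposition.decompose'_apply, ← decomposition.decompose'_apply]
  exact DirectSum.coe_decompose_mul_add_of_left_mem (homogeneousSubmodule σ R)
    ((mem_homogeneousSubmodule k a).2 ha)

end HomogeneousComponent

lemma eval_linForm (k : ℕ) (a w : Fin k → ℂ) : eval w (linForm k a) = ∑ j, a j * w j := by
  simp [linForm]

lemma isHomogeneous_linForm (k : ℕ) (a : Fin k → ℂ) : (linForm k a).IsHomogeneous 1 :=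
  IsHomogeneous.sum _ _ _ fun _ _ ↦ isHomogeneous_C_mul_X _ _

/-- If two ternary forms of degree `m` have no common zero on the line
`x₀ + s x₁ + t x₂ = 0`, then every form of degree at least `2 * m - 1` lies in the ideal generated
by the two forms and the equation of the line. -/
lemma exists_eq_linForm_mul_add {m e : ℕ} {g h q : MvPolynomial (Fin 3) ℂ} {s t : ℂ}
    (hm : 1 ≤ m) (hme : 2 * m ≤ e + 1) (hg : g.IsHomogeneous m) (hh : h.IsHomogeneous m)
    (hq : q.IsHomogeneous e)
    (hgh : ∀ w : Fin 3 → ℂ, w ≠ 0 → eval w (linForm 3 ![1, s, t]) = 0 → eval w g = 0 →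
      eval w h ≠ 0) :
    ∃ a b c, q = linForm 3 ![1, s, t] * a + g * b + h * c := by
  set L := linForm 3 ![1, s, t] with hL
  let f : Fin 3 → MvPolynomial (Fin 2) ℂ := ![-(C s * X 0 + C t * X 1), X 0, X 1]
  let τ : MvPolynomial (Fin 2) ℂ →ₐ[ℂ] MvPolynomial (Fin 3) ℂ := aeval ![X 1, X 2]
  have hf : ∀ i, (f i).IsHomogeneous 1 := by
    intro i
    fin_cases i
    · exact ((isHomogeneous_C_mul_X _ _).add (isHomogeneous_C_mul_X _ _)).neg
    · exact isHomogeneous_X _ _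
    · exact isHomogeneous_X _ _
  have hfhom {n : ℕ} {p : MvPolynomial (Fin 3) ℂ} (hp : p.IsHomogeneous n) :
      (aeval f p).IsHomogeneous n := by
    simpa using hp.aeval f hf
  have heval (w : Fin 2 → ℂ) (p : MvPolynomial (Fin 3) ℂ) :
      eval w (aeval f p) = eval ![-(s * w 0 + t * w 1), w 0, w 1] p := by
    have hfw : (fun i ↦ eval w (f i)) = ![-(s * w 0 + t * w 1), w 0, w 1] := by
      funext i
      fin_cases i <;> simp [f]
    rw [← hfw, ← coe_aeval_eq_eval, ← coe_aeval_eq_eval]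
    exact comp_aeval_apply f (aeval w) p
  have hmod (p : MvPolynomial (Fin 3) ℂ) : ∃ a, p = τ (aeval f p) + L * a := by
    let π := Ideal.Quotient.mkₐ ℂ (Ideal.span {L})
    have hπ : (π.comp τ).comp (aeval f) = π := by
      ext i
      change π (τ (aeval f (X i))) = π (X i)
      rw [aeval_X]
      refine Ideal.Quotient.eq.2 (Ideal.mem_span_singleton.2 ?_)
      fin_cases i
      · refine ⟨-1, ?_⟩
        simp [f, τ, hL, linForm, Fin.sum_univ_three]
        ring
      · simp [f, τ]
      · simp [f, τ]
    have hp : π p = π (τ (aeval f p)) := (DFunLike.congr_fun hπ p).symm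
    obtain ⟨a, ha⟩ := Ideal.mem_span_singleton.1 (Ideal.Quotient.eq.1 hp)
    exact ⟨a, by linear_combination ha⟩
  have hmem := mem_span_pair_of_isHomogeneous hm hme (hfhom hg) (hfhom hh) (hfhom hq) (by
    intro w hw
    rw [heval, heval]
    refine hgh _ (fun h0 ↦ hw ?_) ?_
    · funext i
      fin_cases i
      · simpa using congrFun h0 1
      · simpa using congrFun h0 2
    · simp [hL, eval_linForm, Fin.sum_univ_three])
  obtain ⟨b, c, hbc⟩ := Ideal.mem_span_pair.1 hmem
  obtain ⟨aq, haq⟩ := hmod q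
  obtain ⟨ag, hag⟩ := hmod g
  obtain ⟨ah, hah⟩ := hmod h
  rw [← hbc, map_add, map_mul, map_mul] at haq
  exact ⟨aq - ag * τ b - ah * τ c, τ b, τ c, by
    linear_combination haq - τ b * hag - τ c * hah⟩

/-- Modulo `g` and `h`, every form of degree `d + N` is the product of the `N`-th power of a
linear form that does not vanish at any common zero with a form of degree `d ≥ 2 * m - 2`.
Here this is expressed in terms of values at common zeros. -/
lemma exists_eval_eq_linForm_pow_mul {m d : ℕ} {g h : MvPolynomial (Fin 3) ℂ} {s t : ℂ}
    (hm : 1 ≤ m) (hmd : 2 * m ≤ d + 2) (hg : g.IsHomogeneous m) (hh : h.IsHomogeneous m)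
    (hgh : ∀ w : Fin 3 → ℂ, w ≠ 0 → eval w (linForm 3 ![1, s, t]) = 0 → eval w g = 0 →
      eval w h ≠ 0) (N : ℕ) {q : MvPolynomial (Fin 3) ℂ} (hq : q.IsHomogeneous (d + N)) :
    ∃ p : MvPolynomial (Fin 3) ℂ, p.IsHomogeneous d ∧ ∀ w, eval w g = 0 → eval w h = 0 →
      eval w q = eval w (linForm 3 ![1, s, t]) ^ N * eval w p := by
  induction N generalizing q with
  | zero => exact ⟨q, hq, by simp⟩
  | succ N ih =>
    obtain ⟨a, b, c, habc⟩ := exists_eq_linForm_mul_add hm (by lia) hg hh hq hgh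
    have hcomp := congrArg (homogeneousComponent (d + (N + 1))) habc
    rw [homogeneousComponent_eq_self hq, map_add, map_add,
      show d + (N + 1) = 1 + (d + N) by lia,
      (isHomogeneous_linForm _ _).homogeneousComponent_mul,
      show 1 + (d + N) = m + (1 + (d + N) - m) by lia,
      hg.homogeneousComponent_mul, hh.homogeneousComponent_mul] at hcomp
    obtain ⟨p, hp, hpe⟩ := ih (homogeneousComponent_isHomogeneous (d + N) a)
    refine ⟨p, hp, fun w hgw hhw ↦ ?_⟩
    rw [hcomp, map_add, map_add, map_mul, map_mul, map_mul, hgw, hhw, hpe w hgw hhw]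
    ring

/-- Finitely many nonzero vectors are avoided by some plane `x₀ + t x₁ + t² x₂ = 0`. -/
lemma exists_forall_eval_linForm_ne_zero {ι : Type*} [Finite ι] (v : ι → Fin 3 → ℂ)
    (hv : ∀ i, v i ≠ 0) : ∃ t : ℂ, ∀ i, eval (v i) (linForm 3 ![1, t, t ^ 2]) ≠ 0 := by
  cases nonempty_fintype ι
  let P (i : ι) : Polynomial ℂ := .C (v i 0) + .C (v i 1) * .X + .C (v i 2) * .X ^ 2
  have hP (i : ι) : P i ≠ 0 := by
    intro h0
    refine hv i (funext fun k ↦ ?_)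
    have hk := congrArg (fun p ↦ Polynomial.coeff p (k : ℕ)) h0
    fin_cases k <;> simpa [P, Polynomial.coeff_X, Polynomial.coeff_C,
      Polynomial.coeff_X_pow] using hk
  obtain ⟨t, ht⟩ := Polynomial.exists_eval_ne_zero_of_natDegree_lt_card (∏ i, P i)
    (Finset.prod_ne_zero_iff.2 fun i _ ↦ hP i) (by
      rw [Cardinal.mk_complex]
      exact Cardinal.nat_lt_continuum _)
  rw [Polynomial.eval_prod, Finset.prod_ne_zero_iff] at ht
  refine ⟨t, fun i hi ↦ ht i (Finset.mem_univ i) ?_⟩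
  simp only [eval_linForm, Fin.sum_univ_three, Matrix.cons_val] at hi
  simp [P]
  linear_combination hi

/-- Two non-proportional vectors are separated by a linear form. -/
lemma exists_linForm_separating_s5 {k : ℕ} {u w : Fin k → ℂ} (h : ∀ c : ℂ, u ≠ c • w) :
    ∃ a, eval u (linForm k a) ≠ 0 ∧ eval w (linForm k a) = 0 := by
  have hu : u ∉ Submodule.span ℂ {w} := by
    rw [Submodule.mem_span_singleton]
    rintro ⟨c, hc⟩
    exact h c hc.symm
  obtain ⟨f, hfu, hf⟩ := Submodule.exists_le_ker_of_notMem hu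
  have hfe (x : Fin k → ℂ) : eval x (linForm k fun j ↦ f (Pi.single j 1)) = f x := by
    rw [eval_linForm, LinearMap.pi_apply_eq_sum_univ f x]
    refine Finset.sum_congr rfl fun j _ ↦ ?_
    rw [smul_eq_mul, mul_comm]
    congr 2
    funext i
    simp [Pi.single_apply, eq_comm]
  exact ⟨_, by rwa [hfe], by rw [hfe]; exact hf (Submodule.mem_span_singleton_self w)⟩

/-- Apolarity: a linear relation between `d`-th powers of linear forms is a relation between the
corresponding evaluations on forms of degree `d`. -/
lemma sum_mul_eval_eq_zero_of_sum_smul_linForm_pow_eq_zero {ι : Type*} [Fintype ι] {k d : ℕ}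
    {v : ι → Fin k → ℂ} {c : ι → ℂ} (hc : ∑ i, c i • linForm k (v i) ^ d = 0)
    {p : MvPolynomial (Fin k) ℂ} (hp : p.IsHomogeneous d) : ∑ i, c i * eval (v i) p = 0 := by
  have hmon (α : Fin k →₀ ℕ) (hα : α.sum (fun _ n ↦ n) = d) :
      ∑ i, c i * ∏ j, v i j ^ α j = 0 := by
    have hcoeff := congrArg (coeff α) hc
    have hlin (i : ι) : linForm k (v i) = ∑ j, v i j • X j := by
      simp [linForm, smul_eq_C_mul]
    simp only [hlin, coeff_sum, coeff_smul, coeff_linearCombination_X_pow_of_fintype, hα, if_true,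
      coeff_zero, smul_eq_mul] at hcoeff
    have hne : (α.multinomial : ℂ) ≠ 0 := by
      rw [Finsupp.multinomial_eq]
      exact_mod_cast (Nat.multinomial_pos _ _).ne'
    refine (mul_eq_zero.1 ?_).resolve_left hne
    rw [Finset.mul_sum, ← hcoeff]
    refine Finset.sum_congr rfl fun i _ ↦ ?_
    rw [Finsupp.prod_fintype _ _ (by simp)]
    ring
  simp_rw [eval_eq', Finset.mul_sum]
  rw [Finset.sum_comm]
  refine Finset.sum_eq_zero fun α hα ↦ ?_
  have hdeg : α.sum (fun _ n ↦ n) = d := by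
    simpa [Finsupp.weight_apply] using hp (mem_support_iff.1 hα)
  calc ∑ i, c i * (coeff α p * ∏ j, v i j ^ α j)
      = coeff α p * ∑ i, c i * ∏ j, v i j ^ α j := by
        rw [Finset.mul_sum]
        exact Finset.sum_congr rfl fun i _ ↦ by ring
    _ = 0 := by rw [hmon α hdeg, mul_zero]

/-- The finitely many common zeros of two forms of degree `m ≥ 1` are separated by forms of any
degree `d ≥ 2 * m - 2`. -/
lemma exists_isHomogeneous_separating {ι : Type*} [Fintype ι] {m d : ℕ}
    {g h : MvPolynomial (Fin 3) ℂ} (hm : 1 ≤ m) (hmd : 2 * m ≤ d + 2)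
    (hg : g.IsHomogeneous m) (hh : h.IsHomogeneous m)
    {v : ι → Fin 3 → ℂ} (hv : ∀ i, v i ≠ 0)
    (hdist : ∀ i j, i ≠ j → ∀ lam : ℂ, v i ≠ lam • v j)
    (hzero : ∀ i, eval (v i) g = 0 ∧ eval (v i) h = 0)
    (hall : ∀ w : Fin 3 → ℂ, w ≠ 0 → eval w g = 0 → eval w h = 0 →
      ∃ i, ∃ lam : ℂ, w = lam • v i) (i : ι) :
    ∃ p : MvPolynomial (Fin 3) ℂ, p.IsHomogeneous d ∧ eval (v i) p ≠ 0 ∧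
      ∀ j, j ≠ i → eval (v j) p = 0 := by
  classical
  obtain ⟨t, ht⟩ := exists_forall_eval_linForm_ne_zero v hv
  have hgh : ∀ w : Fin 3 → ℂ, w ≠ 0 → eval w (linForm 3 ![1, t, t ^ 2]) = 0 → eval w g = 0 →
      eval w h ≠ 0 := by
    intro w hw hL hgw hhw
    obtain ⟨j, c, rfl⟩ := hall w hw hgw hhw
    have hc : c ≠ 0 := by
      rintro rfl
      simp at hw
    refine ht j ((mul_eq_zero.1 ?_).resolve_left hc)
    rw [← hL, eval_linForm, eval_linForm, Finset.mul_sum]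
    exact Finset.sum_congr rfl fun k _ ↦ by simp only [Pi.smul_apply, smul_eq_mul]; ring
  have hsep (j : ι) : ∃ a, eval (v i) (linForm 3 a) ≠ 0 ∧
      (j ≠ i → eval (v j) (linForm 3 a) = 0) := by
    by_cases hj : j = i
    · exact ⟨_, ht i, fun hne ↦ absurd hj hne⟩
    · obtain ⟨a, ha, ha0⟩ := exists_linForm_separating_s5 (hdist i j (Ne.symm hj))
      exact ⟨a, ha, fun _ ↦ ha0⟩
  choose a hai haj using hsep
  have hq : (linForm 3 ![1, t, t ^ 2] ^ d * ∏ j, linForm 3 (a j)).IsHomogeneous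
      (d + Fintype.card ι) := by
    have h1 := (isHomogeneous_linForm 3 ![1, t, t ^ 2]).pow d
    have h2 := IsHomogeneous.prod Finset.univ (fun j ↦ linForm 3 (a j)) (fun _ ↦ 1)
      (fun j _ ↦ isHomogeneous_linForm 3 (a j))
    simpa using h1.mul h2
  obtain ⟨p, hp, hpe⟩ := exists_eval_eq_linForm_pow_mul hm hmd hg hh hgh _ hq
  simp only [map_mul, map_pow, map_prod] at hpe
  refine ⟨p, hp, fun h0 ↦ ?_, fun j hj ↦ ?_⟩
  · have hi := hpe (v i) (hzero i).1 (hzero i).2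
    rw [h0, mul_zero] at hi
    exact mul_ne_zero (pow_ne_zero _ (ht i)) (Finset.prod_ne_zero_iff.2 fun j _ ↦ hai j) hi
  · have hj' := hpe (v j) (hzero j).1 (hzero j).2
    rw [Finset.prod_eq_zero (Finset.mem_univ j) (haj j hj), mul_zero] at hj'
    exact (mul_eq_zero.1 hj'.symm).resolve_left (pow_ne_zero _ (ht j))

/-- If `g, h` are homogeneous of degree `m` in three variables whose common projective
zero locus consists of exactly `m²` distinct points `[v_1],…,[v_{m²}]` (a transverse
complete intersection), then these points impose independent conditions on forms of
degree `2m`: the evaluation map `p ↦ (p(v_1),…,p(v_{m²}))` on forms of degree `2m` is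
surjective; equivalently, `ℓ_{v_1}^{2m},…,ℓ_{v_{m²}}^{2m}` are linearly independent. -/
theorem statement5 (m : ℕ) (hm : 1 ≤ m) (g h : MvPolynomial (Fin 3) ℂ)
    (hg : g.IsHomogeneous m) (hh : h.IsHomogeneous m)
    (v : Fin (m ^ 2) → Fin 3 → ℂ) (hv : ∀ i, v i ≠ 0)
    (hdist : ∀ i j, i ≠ j → ∀ lam : ℂ, v i ≠ lam • v j)
    (hzero : ∀ i, MvPolynomial.eval (v i) g = 0 ∧ MvPolynomial.eval (v i) h = 0)
    (hall : ∀ w : Fin 3 → ℂ, w ≠ 0 → MvPolynomial.eval w g = 0 →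
      MvPolynomial.eval w h = 0 → ∃ i, ∃ lam : ℂ, w = lam • v i) :
    (∀ y : Fin (m ^ 2) → ℂ, ∃ p : MvPolynomial (Fin 3) ℂ,
      p.IsHomogeneous (2 * m) ∧ ∀ i, MvPolynomial.eval (v i) p = y i) ∧
    LinearIndependent ℂ (fun i : Fin (m ^ 2) => (linForm 3 (v i)) ^ (2 * m)) := by
  choose p hp hpi hpj using
    exists_isHomogeneous_separating (d := 2 * m) hm (by lia) hg hh hv hdist hzero hall
  constructor
  · intro y
    refine ⟨∑ i, C (y i / eval (v i) (p i)) * p i,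
      IsHomogeneous.sum _ _ _ fun i _ ↦ (hp i).C_mul _, fun j ↦ ?_⟩
    rw [map_sum, Finset.sum_eq_single j]
    · rw [map_mul, eval_C, div_mul_cancel₀ _ (hpi j)]
    · intro i _ hij
      rw [map_mul, hpj i j hij.symm, mul_zero]
    · simp
  · rw [Fintype.linearIndependent_iff]
    intro c hc i
    have hsum := sum_mul_eval_eq_zero_of_sum_smul_linForm_pow_eq_zero hc (hp i)
    rw [Finset.sum_eq_single i (fun j _ hj ↦ by rw [hpj i j hj, mul_zero]) (by simp)] at hsum
    exact (mul_eq_zero.1 hsum).resolve_right (hpi i)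
end

section
/- Let n ≥ 1, m ≥ 2, V = ℂ^{n+1}. For a general symmetric m-multilinear map M : V^m → V (i.e., off the zero set of some nonzero polynomial in the coefficients of M), the set of eigenvector lines {[v] ∈ P^n : v ≠ 0 and M(v,…,v) ∧ v = 0 in Λ²V, i.e. M(v,…,v) = λv for some λ ∈ ℂ} is finite of cardinality exactly (m^{n+1} − 1)/(m − 1) = Σ_{i=0}^n m^i. -/
open MvPolynomial

namespace EigenCount

section DigitMonomial

variable {ι A B : Type*} [CommRing A] [CommRing B]

theorem eq_add_single_of_not_lt {m : ℕ} {ν : ι →₀ ℕ} (h : ¬ ∀ i, ν i < m) :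
    ∃ k, ∃ ν', ν = ν' + Finsupp.single k m ∧ ν.degree = ν'.degree + m := by
  push Not at h
  obtain ⟨k, hk⟩ := h
  have h : ν = ν - Finsupp.single k m + Finsupp.single k m :=
    (tsub_add_cancel_of_le (Finsupp.single_le_iff.2 hk)).symm
  refine ⟨k, _, h, ?_⟩
  conv_lhs => rw [h]
  simp

theorem totalDegree_monomial_one_le (ν : ι →₀ ℕ) :
    (monomial ν (1 : A)).totalDegree ≤ ν.degree :=
  totalDegree_monomial_le _ _

theorem restrictTotalDegree_le_iff {e : ℕ} {S : Submodule A (MvPolynomial ι A)} :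
    restrictTotalDegree ι A e ≤ S ↔ ∀ ν : ι →₀ ℕ, ν.degree ≤ e → monomial ν 1 ∈ S := by
  rw [restrictTotalDegree, restrictSupport_eq_span, Submodule.span_le, Set.image_subset_iff]
  rfl

theorem totalDegree_map_le (φ : A →+* B) (p : MvPolynomial ι A) : (map φ p).totalDegree ≤ p.totalDegree :=
  Finset.sup_mono (support_map_subset φ p)

theorem exists_lift_of_mem_span {φ : A →+* B} (hφ : Function.Surjective φ)
    (S : Submodule A (MvPolynomial ι A)) {s : Set (MvPolynomial ι B)}
    (hs : ∀ x ∈ s, ∃ y ∈ S, map φ y = x) {x : MvPolynomial ι B} (hx : x ∈ Submodule.span B s) :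
    ∃ y ∈ S, map φ y = x := by
  induction hx using Submodule.span_induction with
  | mem x hx => exact hs x hx
  | zero => exact ⟨0, zero_mem _, map_zero _⟩
  | add x y _ _ hx hy =>
    obtain ⟨x', hx', rfl⟩ := hx
    obtain ⟨y', hy', rfl⟩ := hy
    exact ⟨x' + y', add_mem hx' hy', map_add _ _ _⟩
  | smul b x _ hx =>
    obtain ⟨x', hx', rfl⟩ := hx
    obtain ⟨a, rfl⟩ := hφ b
    exact ⟨a • x', S.smul_mem a hx', by simp [smul_eq_C_mul]⟩

variable [Fintype ι]

/-- The monomial `X ^ ν` with every `X i ^ m` replaced by `f i`. -/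
noncomputable def digitMonomial (m : ℕ) (f : ι → MvPolynomial ι A) (ν : ι →₀ ℕ) :
    MvPolynomial ι A :=
  ∏ i, f i ^ (ν i / m) * X i ^ (ν i % m)

/-- The span of the `digitMonomial`s of weight at most `e`. -/
noncomputable def digitSpan (m : ℕ) (f : ι → MvPolynomial ι A) (e : ℕ) :
    Submodule A (MvPolynomial ι A) :=
  Submodule.span A (digitMonomial m f '' {κ | κ.degree ≤ e})

theorem map_digitMonomial (φ : A →+* B) (m : ℕ) (f : ι → MvPolynomial ι A) (ν : ι →₀ ℕ) :
    map φ (digitMonomial m f ν) = digitMonomial m (fun i => map φ (f i)) ν := by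
  simp [digitMonomial, map_prod]

theorem digitMonomial_add_single {m : ℕ} (hm : 0 < m) (f : ι → MvPolynomial ι A)
    (ν : ι →₀ ℕ) (k : ι) :
    digitMonomial m f (ν + Finsupp.single k m) = f k * digitMonomial m f ν := by
  classical
  have h : f k = ∏ i, if i = k then f i else 1 := by simp
  rw [h, digitMonomial, digitMonomial, ← Finset.prod_mul_distrib]
  refine Finset.prod_congr rfl fun i _ => ?_
  by_cases hi : i = k
  · subst hi
    simp [Nat.add_div_right _ hm, pow_succ]
    ring
  · simp [hi]

theorem digitMonomial_of_lt {m : ℕ} (f : ι → MvPolynomial ι A) {ν : ι →₀ ℕ}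
    (h : ∀ i, ν i < m) : digitMonomial m f ν = monomial ν 1 := by
  rw [monomial_eq, C_1, one_mul, Finsupp.prod_fintype _ _ (by simp)]
  exact Finset.prod_congr rfl fun i _ => by simp [Nat.div_eq_of_lt (h i), Nat.mod_eq_of_lt (h i)]

theorem totalDegree_digitMonomial_le {m : ℕ} {f : ι → MvPolynomial ι A}
    (hf : ∀ i, (f i).totalDegree ≤ m) (ν : ι →₀ ℕ) :
    (digitMonomial m f ν).totalDegree ≤ ν.degree := by
  rw [Finsupp.degree_eq_sum]
  refine (totalDegree_finsetProd _ _).trans (Finset.sum_le_sum fun i _ => ?_)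
  refine (totalDegree_mul _ _).trans ?_
  have h1 : (f i ^ (ν i / m)).totalDegree ≤ (ν i / m) * m :=
    (totalDegree_pow _ _).trans (Nat.mul_le_mul_left _ (hf i))
  have h2 : ((X i : MvPolynomial ι A) ^ (ν i % m)).totalDegree ≤ ν i % m := by
    rw [X_pow_eq_monomial]
    exact (totalDegree_monomial_le _ _).trans (by simp)
  have := Nat.div_add_mod' (ν i) m
  omega

theorem degree_le_of_lt {m : ℕ} {ν : ι →₀ ℕ} (h : ∀ i, ν i < m) :
    ν.degree ≤ Fintype.card ι * (m - 1) := by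
  rw [Finsupp.degree_eq_sum]
  refine (Finset.sum_le_card_nsmul _ _ (m - 1) fun i _ => ?_).trans (by simp)
  have := h i
  omega

theorem digitMonomial_mem_span {m : ℕ} (hm : 0 < m) (f : ι → MvPolynomial ι A) {ν : ι →₀ ℕ}
    (h : ¬ ∀ i, ν i < m) : digitMonomial m f ν ∈ Ideal.span (Set.range f) := by
  obtain ⟨k, ν', rfl, -⟩ := eq_add_single_of_not_lt h
  rw [digitMonomial_add_single hm]
  exact Ideal.mul_mem_right _ _ (Ideal.subset_span ⟨k, rfl⟩)

theorem digitMonomial_mem {m : ℕ} (f : ι → MvPolynomial ι A) {e : ℕ} {ν : ι →₀ ℕ}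
    (h : ν.degree ≤ e) : digitMonomial m f ν ∈ digitSpan m f e :=
  Submodule.subset_span ⟨ν, h, rfl⟩

theorem digitSpan_mono {m : ℕ} (f : ι → MvPolynomial ι A) {d e : ℕ} (h : d ≤ e) :
    digitSpan m f d ≤ digitSpan m f e :=
  Submodule.span_mono (Set.image_mono fun _ hκ => le_trans hκ h)

theorem digitSpan_le {m : ℕ} {f : ι → MvPolynomial ι A} (hf : ∀ i, (f i).totalDegree ≤ m)
    (e : ℕ) : digitSpan m f e ≤ restrictTotalDegree ι A e := by
  rw [digitSpan, Submodule.span_le]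
  rintro _ ⟨κ, hκ, rfl⟩
  exact (mem_restrictTotalDegree _ _ _).2 ((totalDegree_digitMonomial_le hf κ).trans hκ)

theorem mul_mem_digitSpan {m : ℕ} (hm : 0 < m) (f : ι → MvPolynomial ι A) (k : ι) {e : ℕ}
    {q : MvPolynomial ι A} (hq : q ∈ digitSpan m f e) : f k * q ∈ digitSpan m f (e + m) := by
  induction hq using Submodule.span_induction with
  | mem x hx =>
    obtain ⟨κ, hκ, rfl⟩ := hx
    rw [← digitMonomial_add_single hm]
    exact digitMonomial_mem f (by simpa using hκ)
  | zero => simp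
  | add x y _ _ hx hy => rw [mul_add]; exact add_mem hx hy
  | smul a x _ hx => rw [mul_smul_comm]; exact Submodule.smul_mem _ _ hx

/-- If the monomials of degree at most `card ι * (m - 1) + 1` lie in the corresponding step of the
filtration by `digitSpan`, then all monomials do. -/
theorem restrictTotalDegree_le_digitSpan {m : ℕ} (hm : 0 < m) {f : ι → MvPolynomial ι A}
    (hf : ∀ i, (f i).totalDegree ≤ m)
    (h : ∀ e ≤ Fintype.card ι * (m - 1) + 1, restrictTotalDegree ι A e ≤ digitSpan m f e)
    (e : ℕ) : restrictTotalDegree ι A e ≤ digitSpan m f e := by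
  induction e using Nat.strong_induction_on with
  | _ e ih =>
  rcases le_or_gt e (Fintype.card ι * (m - 1) + 1) with he | he
  · exact h e he
  rw [restrictTotalDegree_le_iff]
  intro ν hν
  rcases hν.lt_or_eq with hlt | heq
  · exact digitSpan_mono f hlt.le (restrictTotalDegree_le_iff.1 (ih _ hlt) ν le_rfl)
  obtain ⟨ν', hle, hdeg⟩ := Finsupp.exists_le_degree_eq ν (Fintype.card ι * (m - 1) + 1)
    (by omega)
  obtain ⟨ρ, rfl⟩ := exists_add_of_le hle
  have hρ : ν'.degree + ρ.degree = e := by rw [← heq]; simp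
  have key : ∀ y ∈ digitSpan m f (Fintype.card ι * (m - 1) + 1),
      monomial ρ 1 * y ∈ digitSpan m f e := by
    intro y hy
    induction hy using Submodule.span_induction with
    | mem x hx =>
      obtain ⟨κ, hκ, rfl⟩ := hx
      have hκ : κ.degree ≤ Fintype.card ι * (m - 1) + 1 := hκ
      by_cases hlt : ∀ i, κ i < m
      · rw [digitMonomial_of_lt f hlt, monomial_mul, one_mul]
        have := degree_le_of_lt hlt
        refine digitSpan_mono f (d := e - 1) (by omega)
          (restrictTotalDegree_le_iff.1 (ih _ (by omega)) _ ?_)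
        simp only [map_add]
        omega
      · obtain ⟨k, κ', rfl, hk⟩ := eq_add_single_of_not_lt hlt
        rw [digitMonomial_add_single hm, mul_left_comm]
        have : e = (e - m) + m := by omega
        rw [this]
        refine mul_mem_digitSpan hm f k (ih _ (by omega) ?_)
        rw [mem_restrictTotalDegree]
        have h1 := totalDegree_digitMonomial_le hf κ'
        have h2 := totalDegree_monomial_one_le (A := A) ρ
        have h3 := totalDegree_mul (monomial ρ (1 : A)) (digitMonomial m f κ')
        omega
    | zero => simp
    | add x y _ _ hx hy => rw [mul_add]; exact add_mem hx hy
    | smul a x _ hx => rw [mul_smul_comm]; exact Submodule.smul_mem _ _ hx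
  have := key _ (restrictTotalDegree_le_iff.1 (h _ le_rfl) ν' hdeg.le)
  rwa [monomial_mul, one_mul, add_comm] at this

/-- The digit monomials of the polynomials `X i ^ m - X i` span, compatibly with degrees. -/
theorem restrictTotalDegree_le_digitSpan_pow_sub {m : ℕ} (hm : 2 ≤ m) (e : ℕ) :
    restrictTotalDegree ι A e ≤ digitSpan m (fun i => X i ^ m - X i) e := by
  rw [restrictTotalDegree_le_iff]
  suffices ∀ ν : ι →₀ ℕ, monomial ν 1 ∈ digitSpan m (fun i => (X i ^ m - X i : MvPolynomial ι A))
      ν.degree from fun ν hν => digitSpan_mono _ hν (this ν)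
  intro ν
  induction h : ν.degree using Nat.strong_induction_on generalizing ν with
  | _ d ih =>
  subst h
  by_cases hlt : ∀ i, ν i < m
  · rw [← digitMonomial_of_lt (fun i => X i ^ m - X i) hlt]
    exact digitMonomial_mem _ le_rfl
  · obtain ⟨k, ν', rfl, hk⟩ := eq_add_single_of_not_lt hlt
    have h1 : monomial (ν' + Finsupp.single k m) (1 : A) =
        (X k ^ m - X k) * monomial ν' 1 + monomial (ν' + Finsupp.single k 1) 1 := by
      rw [X_pow_eq_monomial, X, sub_mul, monomial_mul, monomial_mul, add_comm ν', add_comm ν']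
      simp
    rw [h1]
    refine add_mem ?_ ?_
    · rw [hk]
      exact mul_mem_digitSpan (by omega) _ k (ih _ (by omega) ν' rfl)
    · refine digitSpan_mono _ ?_ (ih _ ?_ _ rfl)
      · rw [hk]; simp; omega
      · rw [hk]; simp; omega

/-- Nakayama's lemma for polynomials of bounded degree. -/
theorem exists_smul_mem_of_lift {φ : A →+* B} (e : ℕ)
    (S : Submodule A (MvPolynomial ι A))
    (h : ∀ ν : ι →₀ ℕ, ν.degree ≤ e →
      ∃ y ∈ S, y.totalDegree ≤ e ∧ map φ y = monomial ν 1) :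
    ∃ r : A, φ r = 1 ∧ ∀ q : MvPolynomial ι A, q.totalDegree ≤ e → r • q ∈ S := by
  have key : ∀ q ∈ restrictTotalDegree ι A e, map φ q = 0 →
      q ∈ RingHom.ker φ • restrictTotalDegree ι A e := by
    intro q hq h0
    rw [q.as_sum]
    refine sum_mem fun ν hν => ?_
    rw [show monomial ν (coeff ν q) = coeff ν q • monomial ν (1 : A) by simp [smul_monomial]]
    refine Submodule.smul_mem_smul ?_ ?_
    · rw [RingHom.mem_ker, ← coeff_map, h0, coeff_zero]
    · rw [mem_restrictTotalDegree] at hq ⊢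
      exact (totalDegree_monomial_one_le ν).trans ((le_totalDegree hν).trans hq)
  obtain ⟨r, hr, hr'⟩ := Submodule.exists_sub_one_mem_and_smul_le_of_fg_of_le_sup
    (I := RingHom.ker φ) (N := S) (N' := restrictTotalDegree ι A e)
    (P := restrictTotalDegree ι A e) (Module.Finite.iff_fg.1 inferInstance) le_rfl (by
      rw [restrictTotalDegree_le_iff]
      intro ν hν
      obtain ⟨y, hy, hdeg, hmap⟩ := h ν hν
      rw [← add_sub_cancel y (monomial ν 1)]
      refine Submodule.add_mem_sup hy (key _ ?_ (by simp [hmap]))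
      refine sub_mem ?_ ((mem_restrictTotalDegree _ _ _).2 hdeg)
      exact (mem_restrictTotalDegree _ _ _).2 ((totalDegree_monomial_one_le ν).trans hν))
  refine ⟨r, ?_, fun q hq => hr' ?_⟩
  · rw [RingHom.mem_ker, map_sub, map_one, sub_eq_zero] at hr
    exact hr
  · exact Submodule.smul_mem_pointwise_smul _ _ _ ((mem_restrictTotalDegree _ _ _).2 hq)

end DigitMonomial

section Dimension

variable {ι : Type*} [Fintype ι] {K : Type*} [Field K]

/-- The linear endomorphism sending each monomial to the corresponding `digitMonomial`. -/
noncomputable def digitMap (m : ℕ) (f : ι → MvPolynomial ι K) :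
    MvPolynomial ι K →ₗ[K] MvPolynomial ι K :=
  (basisMonomials ι K).constr K (digitMonomial m f)

theorem digitMap_monomial_one (m : ℕ) (f : ι → MvPolynomial ι K) (ν : ι →₀ ℕ) :
    digitMap m f (monomial ν 1) = digitMonomial m f ν := by
  have := (basisMonomials ι K).constr_basis K (digitMonomial m f) ν
  simpa [digitMap] using this

theorem digitMap_monomial (m : ℕ) (f : ι → MvPolynomial ι K) (ν : ι →₀ ℕ) (a : K) :
    digitMap m f (monomial ν a) = a • digitMonomial m f ν := by
  rw [← digitMap_monomial_one, ← map_smul, smul_monomial, smul_eq_mul, mul_one]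

theorem digitMap_X_pow_mul {m : ℕ} (hm : 0 < m) (f : ι → MvPolynomial ι K) (k : ι)
    (q : MvPolynomial ι K) : digitMap m f (X k ^ m * q) = f k * digitMap m f q := by
  induction q using MvPolynomial.induction_on' with
  | monomial ν a =>
    rw [X_pow_eq_monomial, monomial_mul, one_mul, digitMap_monomial, digitMap_monomial, add_comm,
      digitMonomial_add_single hm, mul_smul_comm]
  | add p q hp hq => simp only [mul_add, map_add, hp, hq]

theorem digitMap_bijective {m : ℕ} {f : ι → MvPolynomial ι K}
    (hf : ∀ i, (f i).totalDegree ≤ m)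
    (h : ∀ e, restrictTotalDegree ι K e ≤ digitSpan m f e) :
    Function.Bijective (digitMap m f) := by
  have hle : ∀ e, digitSpan m f e ≤ (restrictTotalDegree ι K e).map (digitMap m f) := by
    intro e
    rw [digitSpan, Submodule.span_le]
    rintro _ ⟨κ, hκ, rfl⟩
    exact ⟨monomial κ 1, (mem_restrictTotalDegree _ _ _).2
      ((totalDegree_monomial_one_le κ).trans hκ), digitMap_monomial_one m f κ⟩
  have hmaps : ∀ e, ∀ q ∈ restrictTotalDegree ι K e, digitMap m f q ∈ restrictTotalDegree ι K e := by
    intro e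
    refine (restrictTotalDegree_le_iff (S := (restrictTotalDegree ι K e).comap (digitMap m f))).2 ?_
    intro ν hν
    rw [Submodule.mem_comap, digitMap_monomial_one, mem_restrictTotalDegree]
    exact (totalDegree_digitMonomial_le hf ν).trans hν
  constructor
  · rw [← LinearMap.ker_eq_bot, LinearMap.ker_eq_bot']
    intro q hq
    have hinj : Function.Injective ((digitMap m f).restrict (hmaps q.totalDegree)) := by
      rw [LinearMap.injective_iff_surjective]
      rintro ⟨y, hy⟩
      obtain ⟨x, hx, hxy⟩ := hle _ (h _ hy)
      exact ⟨⟨x, hx⟩, Subtype.ext hxy⟩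
    have hmem : q ∈ restrictTotalDegree ι K q.totalDegree :=
      (mem_restrictTotalDegree _ _ _).2 le_rfl
    have := @hinj ⟨q, hmem⟩ 0 (Subtype.ext (by simpa using hq))
    simpa using congrArg Subtype.val this
  · intro q
    obtain ⟨x, -, hx⟩ := hle _ (h q.totalDegree ((mem_restrictTotalDegree _ _ _).2 le_rfl))
    exact ⟨x, hx⟩

theorem finrank_quotient_span {m : ℕ} (hm : 0 < m) {f : ι → MvPolynomial ι K}
    (hf : ∀ i, (f i).totalDegree ≤ m)
    (h : ∀ e, restrictTotalDegree ι K e ≤ digitSpan m f e) :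
    Module.Finite K (MvPolynomial ι K ⧸ Ideal.span (Set.range f)) ∧
    Module.finrank K (MvPolynomial ι K ⧸ Ideal.span (Set.range f)) = m ^ Fintype.card ι := by
  classical
  let T : MvPolynomial ι K ≃ₗ[K] MvPolynomial ι K :=
    LinearEquiv.ofBijective (digitMap m f) (digitMap_bijective hf h)
  have hT : ∀ q, T q = digitMap m f q := fun q => rfl
  let b : (ι → Fin m) → ι →₀ ℕ := fun β => Finsupp.equivFunOnFinite.symm fun i => (β i : ℕ)
  have hb : ∀ β i, b β i = β i := fun β i => rfl
  have hbinj : Function.Injective b := by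
    intro β γ hβγ
    funext i
    exact Fin.ext (DFunLike.congr_fun hβγ i)
  let π₀ : MvPolynomial ι K →ₗ[K] ((ι → Fin m) → K) := LinearMap.pi fun β => lcoeff K (b β)
  let π := π₀ ∘ₗ T.symm.toLinearMap
  have hπ₀ : ∀ q β, π₀ q β = coeff (b β) q := fun q β => rfl
  have hπ : Function.Surjective π := by
    refine Function.Surjective.comp (g := π₀) ?_ T.symm.surjective
    intro a
    refine ⟨∑ β, monomial (b β) (a β), funext fun γ => ?_⟩
    rw [hπ₀, coeff_sum]
    simp [coeff_monomial, hbinj.eq_iff]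
  have hker : LinearMap.ker π = (Ideal.span (Set.range f)).restrictScalars K := by
    ext q
    rw [LinearMap.mem_ker, Submodule.restrictScalars_mem]
    constructor
    · intro hq
      obtain ⟨p, rfl⟩ := T.surjective q
      have hp : ∀ β, coeff (b β) p = 0 := fun β => by
        simpa [π, hπ₀] using congrFun hq β
      rw [hT, p.as_sum, map_sum]
      refine sum_mem fun ν hν => ?_
      rw [digitMap_monomial, smul_eq_C_mul]
      refine Ideal.mul_mem_left _ _ (digitMonomial_mem_span hm f fun hlt => ?_)
      refine (mem_support_iff.1 hν) ?_
      rw [← hp fun i => ⟨ν i, hlt i⟩]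
      exact congrArg (coeff · p) (Finsupp.ext fun i => by simp [hb])
    · intro hq
      obtain ⟨c, rfl⟩ := Ideal.mem_span_range_iff_exists_fun.1 hq
      rw [map_sum]
      refine Finset.sum_eq_zero fun i _ => funext fun β => ?_
      obtain ⟨d, hd⟩ := T.surjective (c i)
      rw [← hd, mul_comm, hT, ← digitMap_X_pow_mul hm, ← hT]
      have hβ : ¬ Finsupp.single i m ≤ b β := by
        simp [Finsupp.single_le_iff, hb]
      simp [π, hπ₀, X_pow_eq_monomial, coeff_monomial_mul', hβ]
  let e₁ := LinearMap.quotKerEquivOfSurjective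
    (Ideal.Quotient.mkₐ K (Ideal.span (Set.range f))).toLinearMap
    (Ideal.Quotient.mkₐ_surjective K _)
  have hker' : LinearMap.ker π =
      LinearMap.ker (Ideal.Quotient.mkₐ K (Ideal.span (Set.range f))).toLinearMap := by
    rw [hker]
    ext q
    simp [Ideal.Quotient.eq_zero_iff_mem]
  let e₂ := (e₁.symm.trans (Submodule.quotEquivOfEq _ _ hker'.symm)).trans
    (π.quotKerEquivOfSurjective hπ)
  refine ⟨Module.Finite.equiv e₂.symm, ?_⟩
  rw [e₂.finrank_eq, Module.finrank_pi]
  simp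

end Dimension

section Reduced

theorem isReduced_of_isMaximal_mul_self {A : Type*} [CommRing A] [IsNoetherianRing A]
    (h : ∀ M : Ideal A, M.IsMaximal → M * M = M) : IsReduced A := by
  refine ⟨fun a ha => ?_⟩
  by_contra h0
  have hne : Ideal.span {a} ≠ ⊥ := by simpa using h0
  have hprop : Module.annihilator A (Ideal.span {a}) ≠ ⊤ := by
    rw [Ne, Module.annihilator_eq_top_iff]
    intro hs
    exact hne ((Submodule.subsingleton_iff_eq_bot).1 hs)
  obtain ⟨M, hM, hle⟩ := Ideal.exists_le_maximal _ hprop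
  obtain ⟨e, he, rfl⟩ := (Ideal.isIdempotentElem_iff_of_fg M (IsNoetherian.noetherian M)).1 (h M hM)
  have haM : a ∈ Ideal.span {e} := by
    obtain ⟨k, hk⟩ := ha
    exact hM.isPrime.mem_of_pow_mem k (hk ▸ zero_mem _)
  obtain ⟨c, rfl⟩ := Ideal.mem_span_singleton'.1 haM
  have : (1 - e) ∈ Ideal.span {e} := by
    refine hle ?_
    rw [Submodule.mem_annihilator_span_singleton]
    have := he.eq
    simp only [smul_eq_mul]
    linear_combination (-c) * this
  refine hM.ne_top ((Ideal.eq_top_iff_one _).2 ?_)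
  have h1 := add_mem this (Ideal.mem_span_singleton_self e)
  rwa [sub_add_cancel] at h1

variable {ι : Type*} [Fintype ι] [DecidableEq ι] {K : Type*} [Field K]

/-- First order Taylor expansion. -/
theorem sub_taylor_mem (z : ι → K) (q : MvPolynomial ι K) :
    q - C (eval z q) - ∑ j, C (eval z (pderiv j q)) * (X j - C (z j)) ∈
      vanishingIdeal K {z} ^ 2 := by
  induction q using MvPolynomial.induction_on with
  | C a => simp
  | add p q hp hq =>
    convert add_mem hp hq using 1
    simp only [map_add, add_mul, Finset.sum_add_distrib]
    ring
  | mul_X q k hq =>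
    have h1 : (q - C (eval z q)) * (X k - C (z k)) ∈ vanishingIdeal K {z} ^ 2 := by
      rw [pow_two]
      refine Ideal.mul_mem_mul ?_ ?_ <;> simp
    convert add_mem (Ideal.mul_mem_right (C (z k)) _ hq) h1 using 1
    have h2 : ∑ j, C (eval z (pderiv j (q * X k))) * (X j - C (z j)) =
        (∑ j, C (eval z (pderiv j q)) * (X j - C (z j))) * C (z k) +
          C (eval z q) * (X k - C (z k)) := by
      have h3 : C (eval z q) * (X k - C (z k)) =
          ∑ j, C (eval z q * (Pi.single k 1 : ι → K) j) * (X j - C (z j)) := by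
        rw [Finset.sum_eq_single k] <;> simp +contextual
      rw [h3, Finset.sum_mul, ← Finset.sum_add_distrib]
      refine Finset.sum_congr rfl fun j _ => ?_
      simp only [Derivation.leibniz, pderiv_X, smul_eq_mul, map_add, map_mul, eval_X]
      rcases eq_or_ne k j with rfl | hne
      · simp; ring
      · simp [hne.symm]; ring
    rw [h2]
    simp only [map_mul, eval_X]
    ring

/-- The Jacobian determinant of a family of polynomials. -/
noncomputable def jacobian {A : Type*} [CommRing A] (f : ι → MvPolynomial ι A) :
    MvPolynomial ι A :=
  (Matrix.of fun i j => pderiv j (f i)).det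

theorem map_jacobian {A B : Type*} [CommRing A] [CommRing B] (φ : A →+* B)
    (f : ι → MvPolynomial ι A) : map φ (jacobian f) = jacobian fun i => map φ (f i) := by
  rw [jacobian, RingHom.map_det, jacobian]
  congr 1
  ext i j : 2
  simp [pderiv_map]

theorem vanishingIdeal_le_of_jacobian_ne_zero (f : ι → MvPolynomial ι K) (z : ι → K)
    (hz : ∀ i, eval z (f i) = 0) (hJ : eval z (jacobian f) ≠ 0) :
    vanishingIdeal K {z} ≤ vanishingIdeal K {z} ^ 2 ⊔ Ideal.span (Set.range f) := by
  set N : Matrix ι ι K := Matrix.of fun i j => eval z (pderiv j (f i)) with hN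
  have hdet : IsUnit N.det := by
    rw [isUnit_iff_ne_zero]
    convert hJ
    rw [jacobian, RingHom.map_det]
    rfl
  have hw : ∀ i, ∑ j, C (N i j) * (X j - C (z j)) ∈
      vanishingIdeal K {z} ^ 2 ⊔ Ideal.span (Set.range f) := by
    intro i
    have h1 := sub_taylor_mem z (f i)
    rw [hz, map_zero, sub_zero] at h1
    have h2 : f i ∈ Ideal.span (Set.range f) := Ideal.subset_span ⟨i, rfl⟩
    have h3 := sub_mem (Ideal.mem_sup_right (S := vanishingIdeal K {z} ^ 2) h2)
      (Ideal.mem_sup_left (T := Ideal.span (Set.range f)) h1)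
    rwa [sub_sub_cancel] at h3
  have hX : ∀ j, X j - C (z j) ∈ vanishingIdeal K {z} ^ 2 ⊔ Ideal.span (Set.range f) := by
    intro j
    have h1 : X j - C (z j) = ∑ i, C (N⁻¹ j i) * ∑ l, C (N i l) * (X l - C (z l)) := by
      simp only [Finset.mul_sum, ← mul_assoc, ← C_mul]
      rw [Finset.sum_comm]
      simp only [← Finset.sum_mul, ← map_sum, ← Matrix.mul_apply, Matrix.nonsing_inv_mul N hdet]
      rw [Finset.sum_eq_single j] <;> simp +contextual [eq_comm]
    rw [h1]
    exact sum_mem fun i _ => Ideal.mul_mem_left _ _ (hw i)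
  intro q hq
  have hq0 : eval z q = 0 := by simpa using hq
  have h1 := Ideal.mem_sup_left (T := Ideal.span (Set.range f)) (sub_taylor_mem z q)
  rw [hq0, map_zero, sub_zero] at h1
  rw [← sub_add_cancel q (∑ j, C (eval z (pderiv j q)) * (X j - C (z j)))]
  exact add_mem h1 (sum_mem fun j _ => Ideal.mul_mem_left _ _ (hX j))

theorem isReduced_quotient_of_jacobian [IsAlgClosed K] (f : ι → MvPolynomial ι K)
    (hJ : ∀ z, (∀ i, eval z (f i) = 0) → eval z (jacobian f) ≠ 0) :
    IsReduced (MvPolynomial ι K ⧸ Ideal.span (Set.range f)) := by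
  set I := Ideal.span (Set.range f) with hI
  refine isReduced_of_isMaximal_mul_self fun M hM => le_antisymm Ideal.mul_le_left ?_
  have hsurj : Function.Surjective (Ideal.Quotient.mk I) := Ideal.Quotient.mk_surjective
  have hmax : (M.comap (Ideal.Quotient.mk I)).IsMaximal := Ideal.comap_isMaximal_of_surjective _ hsurj
  obtain ⟨z, hz⟩ := isMaximal_iff_eq_vanishingIdeal_singleton.1 hmax
  have hfz : ∀ i, eval z (f i) = 0 := by
    intro i
    have : f i ∈ M.comap (Ideal.Quotient.mk I) := by
      have hi : f i ∈ I := Ideal.subset_span ⟨i, rfl⟩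
      rw [Ideal.mem_comap, Ideal.Quotient.eq_zero_iff_mem.2 hi]
      exact zero_mem _
    rw [hz] at this
    simpa using this
  have hle := Ideal.map_mono (f := Ideal.Quotient.mk I)
    (vanishingIdeal_le_of_jacobian_ne_zero f z hfz (hJ z hfz))
  rw [← hz, Ideal.map_sup, Ideal.map_pow, Ideal.map_comap_of_surjective _ hsurj,
    Ideal.map_quotient_self, sup_bot_eq, pow_two] at hle
  exact hle

end Reduced

section Count

variable {ι : Type*} [Fintype ι] {K : Type*} [Field K] [IsAlgClosed K]

theorem card_zeros_eq_finrank (f : ι → MvPolynomial ι K)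
    [Module.Finite K (MvPolynomial ι K ⧸ Ideal.span (Set.range f))]
    [IsReduced (MvPolynomial ι K ⧸ Ideal.span (Set.range f))] :
    {z : ι → K | ∀ i, eval z (f i) = 0}.Finite ∧
    Nat.card {z : ι → K | ∀ i, eval z (f i) = 0} =
      Module.finrank K (MvPolynomial ι K ⧸ Ideal.span (Set.range f)) := by
  set I := Ideal.span (Set.range f) with hI
  set Z := {z : ι → K | ∀ i, eval z (f i) = 0} with hZ
  have hvan : ∀ z : Z, ∀ q ∈ I, aeval z.1 q = 0 := by
    intro z q hq
    have : I ≤ RingHom.ker (aeval (R := K) z.1) := by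
      rw [hI, Ideal.span_le]
      rintro _ ⟨i, rfl⟩
      simpa [RingHom.mem_ker] using z.2 i
    exact this hq
  let ev : Z → (MvPolynomial ι K ⧸ I →ₐ[K] K) := fun z => Ideal.Quotient.liftₐ I (aeval z.1) (hvan z)
  have hev : ∀ z q, ev z (Ideal.Quotient.mk I q) = eval z.1 q := fun z q => by simp [ev]
  have hinj : Function.Injective ev := by
    intro z w hzw
    refine Subtype.ext (funext fun i => ?_)
    have := DFunLike.congr_fun hzw (Ideal.Quotient.mk I (X i))
    simpa [hev] using this
  have hfin : Finite Z := Finite.of_injective ev hinj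
  refine ⟨Set.toFinite Z, le_antisymm ?_ ?_⟩
  · exact (Nat.card_le_card_of_injective ev hinj).trans (card_algHom_le_finrank _ _ _)
  · have : Fintype Z := Fintype.ofFinite Z
    let E : (MvPolynomial ι K ⧸ I) →ₗ[K] (Z → K) := LinearMap.pi fun z => (ev z).toLinearMap
    have hE : Function.Injective E := by
      rw [← LinearMap.ker_eq_bot, LinearMap.ker_eq_bot']
      intro a ha
      obtain ⟨q, rfl⟩ := Ideal.Quotient.mk_surjective a
      have hq : q ∈ vanishingIdeal K (zeroLocus K I) := by
        intro z hz
        have hzZ : z ∈ Z := fun i => by simpa using hz (f i) (Ideal.subset_span ⟨i, rfl⟩)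
        have := congrFun ha ⟨z, hzZ⟩
        simpa [E, hev] using this
      rw [vanishingIdeal_zeroLocus_eq_radical] at hq
      obtain ⟨k, hk⟩ := hq
      have : IsNilpotent (Ideal.Quotient.mk I q) :=
        ⟨k, by rw [← map_pow, Ideal.Quotient.eq_zero_iff_mem]; exact hk⟩
      exact this.eq_zero
    have := LinearMap.finrank_le_finrank_of_injective hE
    rwa [Module.finrank_pi, ← Nat.card_eq_fintype_card] at this

end Count

section Generic

variable {ι : Type*} [Fintype ι] {A B : Type*} [CommRing A] [CommRing B]

theorem map_mem_digitSpan (φ : A →+* B) (m : ℕ) (F : ι → MvPolynomial ι A) {e : ℕ}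
    {q : MvPolynomial ι A} (hq : q ∈ digitSpan m F e) :
    map φ q ∈ digitSpan m (fun i => map φ (F i)) e := by
  induction hq using Submodule.span_induction with
  | mem x hx =>
    obtain ⟨κ, hκ, rfl⟩ := hx
    rw [map_digitMonomial]
    exact digitMonomial_mem _ hκ
  | zero => simp
  | add x y _ _ hx hy => rw [map_add]; exact add_mem hx hy
  | smul a x _ hx =>
    rw [smul_eq_C_mul, map_mul, map_C, ← smul_eq_C_mul]
    exact Submodule.smul_mem _ _ hx

theorem exists_smul_mem_digitSpan {φ : A →+* B} (hφ : Function.Surjective φ) {m : ℕ} (hm : 2 ≤ m)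
    {F : ι → MvPolynomial ι A} (hF : ∀ i, (F i).totalDegree ≤ m)
    (hF₀ : ∀ i, map φ (F i) = X i ^ m - X i) (e : ℕ) :
    ∃ r : A, φ r = 1 ∧ ∀ q : MvPolynomial ι A, q.totalDegree ≤ e → r • q ∈ digitSpan m F e := by
  refine exists_smul_mem_of_lift e _ fun ν hν => ?_
  obtain ⟨y, hy, hy'⟩ := exists_lift_of_mem_span hφ (digitSpan m F e) (s := digitMonomial m
    (fun i => X i ^ m - X i) '' {κ | κ.degree ≤ e}) (by
      rintro _ ⟨κ, hκ, rfl⟩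
      exact ⟨_, digitMonomial_mem F hκ, by simp only [map_digitMonomial, hF₀]⟩)
    (restrictTotalDegree_le_iff.1 (restrictTotalDegree_le_digitSpan_pow_sub hm e) ν hν)
  exact ⟨y, hy, (mem_restrictTotalDegree _ _ _).1 (digitSpan_le hF e hy), hy'⟩

variable [DecidableEq ι]

/-- The ideal of the singular points of the zero scheme of `f`. -/
noncomputable def singularIdeal (f : ι → MvPolynomial ι A) : Ideal (MvPolynomial ι A) :=
  Ideal.span (insert (jacobian f) (Set.range f))

theorem map_singularIdeal (φ : A →+* B) (f : ι → MvPolynomial ι A) :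
    (singularIdeal f).map (map φ) = singularIdeal fun i => map φ (f i) := by
  rw [singularIdeal, Ideal.map_span, Set.image_insert_eq, map_jacobian, ← Set.range_comp]
  rfl

theorem eval_jacobian_pow_sub {K : Type*} [Field K] (m : ℕ) (z : ι → K) :
    eval z (jacobian fun i => (X i ^ m - X i : MvPolynomial ι K)) =
      ∏ i, (m * z i ^ (m - 1) - 1) := by
  rw [jacobian, RingHom.map_det, ← Matrix.det_diagonal]
  congr 1
  ext i j
  rcases eq_or_ne i j with rfl | hne
  · simp
  · simp [hne]

theorem singularIdeal_pow_sub {K : Type*} [Field K] [IsAlgClosed K] [CharZero K] {m : ℕ}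
    (hm : 2 ≤ m) : singularIdeal (fun i => (X i ^ m - X i : MvPolynomial ι K)) = ⊤ := by
  rw [← Ideal.radical_eq_top, ← vanishingIdeal_zeroLocus_eq_radical (K := K)]
  convert vanishingIdeal_empty (k := K) (K := K)
  rw [Set.eq_empty_iff_forall_notMem]
  intro z hz
  have h1 : ∀ i, z i ^ m - z i = 0 := fun i => by
    simpa using hz (X i ^ m - X i) (Ideal.subset_span (Or.inr ⟨i, rfl⟩))
  have h2 : eval z (jacobian fun i => (X i ^ m - X i : MvPolynomial ι K)) = 0 := by
    simpa using hz _ (Ideal.subset_span (Or.inl rfl))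
  rw [eval_jacobian_pow_sub, Finset.prod_eq_zero_iff] at h2
  obtain ⟨i, -, hi⟩ := h2
  obtain ⟨l, rfl⟩ : ∃ l, m = l + 2 := ⟨m - 2, by omega⟩
  have h3 := h1 i
  simp only [Nat.add_succ_sub_one] at hi
  have hz0 : z i ≠ 0 := by
    intro h0
    simp [h0] at hi
  have h4 : z i ^ (l + 1) = 1 := by
    refine mul_right_cancel₀ hz0 ?_
    linear_combination h3
  rw [h4] at hi
  have h5 : ((l + 1 : ℕ) : K) = 0 := by
    push_cast at hi ⊢
    linear_combination hi
  exact Nat.succ_ne_zero l (Nat.cast_eq_zero.1 h5)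

theorem exists_C_mem_singularIdeal {K : Type*} [Field K] [IsAlgClosed K] [CharZero K]
    {φ : A →+* K} (hφ : Function.Surjective φ) {m : ℕ} (hm : 2 ≤ m)
    {F : ι → MvPolynomial ι A} (hF : ∀ i, (F i).totalDegree ≤ m)
    (hF₀ : ∀ i, map φ (F i) = X i ^ m - X i) :
    ∃ r : A, φ r = 1 ∧ C r ∈ singularIdeal F := by
  have htop : (1 : MvPolynomial ι K) ∈ (singularIdeal F).map (map φ) := by
    rw [map_singularIdeal]
    simp only [hF₀, singularIdeal_pow_sub hm, Submodule.mem_top]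
  obtain ⟨y₀, hy₀, hy₀'⟩ := (Ideal.mem_map_iff_of_surjective _ (map_surjective φ hφ)).1 htop
  set e := Fintype.card ι * (m - 1) + y₀.totalDegree with he
  have key : ∀ ν : ι →₀ ℕ, ν.degree ≤ e → ∃ y ∈ (singularIdeal F).restrictScalars A ⊓
      restrictTotalDegree ι A e, map φ y = monomial ν 1 := by
    intro ν hν
    refine exists_lift_of_mem_span hφ _ (s := digitMonomial m
      (fun i => X i ^ m - X i) '' {κ | κ.degree ≤ e}) ?_
      (restrictTotalDegree_le_iff.1 (restrictTotalDegree_le_digitSpan_pow_sub hm e) ν hν)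
    rintro _ ⟨κ, hκ, rfl⟩
    by_cases hlt : ∀ i, κ i < m
    · refine ⟨monomial κ 1 * y₀, ⟨Ideal.mul_mem_left _ _ hy₀, ?_⟩, ?_⟩
      · refine (mem_restrictTotalDegree _ _ _).2 ((totalDegree_mul _ _).trans ?_)
        exact add_le_add_left ((totalDegree_monomial_one_le κ).trans (degree_le_of_lt hlt)) _
      · rw [map_mul, hy₀', digitMonomial_of_lt _ hlt, map_monomial, map_one, mul_one]
    · refine ⟨digitMonomial m F κ, ⟨?_, digitSpan_le hF _ (digitMonomial_mem F hκ)⟩,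
        by simp only [map_digitMonomial, hF₀]⟩
      exact Ideal.span_mono (Set.subset_insert _ _) (digitMonomial_mem_span (by omega) F hlt)
  obtain ⟨r, hr, hr'⟩ := exists_smul_mem_of_lift e ((singularIdeal F).restrictScalars A)
    fun ν hν => by
      obtain ⟨y, ⟨hy, hdeg⟩, hmap⟩ := key ν hν
      exact ⟨y, hy, (mem_restrictTotalDegree _ _ _).1 hdeg, hmap⟩
  refine ⟨r, hr, ?_⟩
  have := hr' 1 (by simp)
  rwa [smul_eq_C_mul, mul_one] at this

/-- A deformation of the system `X i ^ m - X i` keeps, outside a hypersurface, the spanning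
property of the digit monomials and the regularity of all zeros. -/
theorem exists_discriminant {K : Type*} [Field K] [IsAlgClosed K] [CharZero K]
    {φ₀ : A →+* K} (hφ₀ : Function.Surjective φ₀) {m : ℕ} (hm : 2 ≤ m)
    {F : ι → MvPolynomial ι A} (hF : ∀ i, (F i).totalDegree ≤ m)
    (hF₀ : ∀ i, map φ₀ (F i) = X i ^ m - X i) :
    ∃ D : A, φ₀ D = 1 ∧ ∀ φ : A →+* K, φ D ≠ 0 →
      (∀ e, restrictTotalDegree ι K e ≤ digitSpan m (fun i => map φ (F i)) e) ∧
      ∀ z, (∀ i, eval z (map φ (F i)) = 0) → eval z (jacobian fun i => map φ (F i)) ≠ 0 := by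
  choose r hr hr' using exists_smul_mem_digitSpan hφ₀ hm hF hF₀
  obtain ⟨s, hs, hs'⟩ := exists_C_mem_singularIdeal hφ₀ hm hF hF₀
  refine ⟨(∏ e ∈ Finset.range (Fintype.card ι * (m - 1) + 2), r e) * s, by simp [hr, hs], ?_⟩
  intro φ hφ
  rw [map_mul, map_prod, mul_ne_zero_iff, Finset.prod_ne_zero_iff] at hφ
  obtain ⟨hφr, hφs⟩ := hφ
  refine ⟨restrictTotalDegree_le_digitSpan (by omega)
    (fun i => (totalDegree_map_le _ _).trans (hF i)) fun e he => ?_, fun z hz hJ => hφs ?_⟩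
  · rw [restrictTotalDegree_le_iff]
    intro ν hν
    have h1 := map_mem_digitSpan φ m F
      (hr' e (monomial ν 1) ((totalDegree_monomial_one_le ν).trans hν))
    rw [smul_eq_C_mul, map_mul, map_C, map_monomial, map_one, ← smul_eq_C_mul] at h1
    exact (Submodule.smul_mem_iff _ (hφr e (Finset.mem_range.2 (by omega)))).1 h1
  · have h1 := Ideal.mem_map_of_mem (map φ) hs'
    rw [map_singularIdeal, map_C] at h1
    have h2 : singularIdeal (fun i => map φ (F i)) ≤ RingHom.ker (eval z) := by
      rw [singularIdeal, Ideal.span_le]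
      rintro _ (rfl | ⟨i, rfl⟩)
      · exact hJ
      · exact hz i
    simpa using h2 h1

end Generic

section Homogeneous

variable {ι : Type*} [Fintype ι] {K : Type*} [Field K]

theorem eval_smul_of_isHomogeneous {p : MvPolynomial ι K} {m : ℕ} (hp : p.IsHomogeneous m)
    (t : K) (w : ι → K) : eval (t • w) p = t ^ m * eval w p := by
  rw [eval_eq', eval_eq', Finset.mul_sum]
  refine Finset.sum_congr rfl fun d hd => ?_
  have h : ∑ i, d i = m := by
    rw [← Finsupp.degree_eq_sum, ← hp (mem_support_iff.1 hd), Finsupp.degree_eq_weight_one]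
    rfl
  simp only [Pi.smul_apply, smul_eq_mul, mul_pow, Finset.prod_mul_distrib,
    Finset.prod_pow_eq_pow_sum, h]
  ring

theorem eq_zero_of_eval_eq_zero [Infinite K] {m : ℕ} (hm : 2 ≤ m) {p : ι → MvPolynomial ι K}
    (hp : ∀ i, (p i).IsHomogeneous m)
    (h : ∀ e, restrictTotalDegree ι K e ≤ digitSpan m (fun i => p i - X i) e)
    {w : ι → K} (hw : ∀ i, eval w (p i) = 0) : w = 0 := by
  by_contra hne
  obtain ⟨k, hk⟩ := Function.ne_iff.1 hne
  let ψ : MvPolynomial ι K →ₐ[K] Polynomial K := aeval fun i => Polynomial.C (w i) * Polynomial.X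
  have hψX : ∀ i, ψ (X i) = Polynomial.C (w i) * Polynomial.X := fun i => aeval_X _ _
  have hψp : ∀ i, ψ (p i) = 0 := by
    intro i
    refine Polynomial.funext fun t => ?_
    have h1 : Polynomial.eval t (ψ (p i)) = eval (t • w) (p i) := by
      have : ((Polynomial.aeval t).comp ψ) = aeval (t • w) := by
        ext j
        simp [hψX, mul_comm (w j)]
      have := DFunLike.congr_fun this (p i)
      simpa using this
    rw [h1, eval_smul_of_isHomogeneous (hp i), hw]
    simp
  set e := Fintype.card ι * (m - 1) + 1 with he
  have hdeg : ∀ κ : ι →₀ ℕ, κ.degree ≤ e →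
      ψ (digitMonomial m (fun i => p i - X i) κ) ∈ Polynomial.degreeLT K e := by
    intro κ hκ
    have hL : ∀ i, (Polynomial.C (w i) * Polynomial.X).natDegree ≤ 1 := fun i =>
      (Polynomial.natDegree_C_mul_le _ _).trans Polynomial.natDegree_X_le
    have h1 : (ψ (digitMonomial m (fun i => p i - X i) κ)).natDegree ≤
        ∑ i, (κ i / m + κ i % m) := by
      rw [digitMonomial, map_prod]
      refine (Polynomial.natDegree_prod_le _ _).trans (Finset.sum_le_sum fun i _ => ?_)
      rw [map_mul, map_pow, map_pow, map_sub, hψp, hψX, zero_sub]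
      refine Polynomial.natDegree_mul_le.trans (add_le_add ?_ ?_)
      · refine Polynomial.natDegree_pow_le.trans ?_
        rw [Polynomial.natDegree_neg]
        exact (Nat.mul_le_mul_left _ (hL i)).trans (by simp)
      · exact Polynomial.natDegree_pow_le.trans ((Nat.mul_le_mul_left _ (hL i)).trans (by simp))
    have hterm : ∀ i, κ i / m + κ i % m ≤ κ i := by
      intro i
      have h2 := Nat.div_add_mod (κ i) m
      have h3 := Nat.mul_le_mul_right (κ i / m) (show 1 ≤ m by omega)
      omega
    have h2 : ∑ i, (κ i / m + κ i % m) < e := by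
      by_cases hlt : ∀ i, κ i < m
      · refine lt_of_le_of_lt (Finset.sum_le_sum fun i _ => hterm i) ?_
        rw [← Finsupp.degree_eq_sum]
        exact Nat.lt_succ_of_le (degree_le_of_lt hlt)
      · push Not at hlt
        obtain ⟨j, hj⟩ := hlt
        refine lt_of_lt_of_le ?_ hκ
        rw [Finsupp.degree_eq_sum]
        refine Finset.sum_lt_sum (fun i _ => hterm i) ⟨j, Finset.mem_univ j, ?_⟩
        have h2 := Nat.div_add_mod (κ j) m
        have h3 := Nat.mul_le_mul_right (κ j / m) hm
        have h4 := Nat.div_pos hj (by omega)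
        omega
    rw [Polynomial.mem_degreeLT]
    exact lt_of_le_of_lt Polynomial.degree_le_natDegree (by exact_mod_cast h1.trans_lt h2)
  have hle : digitSpan m (fun i => p i - X i) e ≤
      (Polynomial.degreeLT K e).comap ψ.toLinearMap := by
    rw [digitSpan, Submodule.span_le]
    rintro _ ⟨κ, hκ, rfl⟩
    exact hdeg κ hκ
  have h1 : X k ^ e ∈ restrictTotalDegree ι K e := by
    rw [mem_restrictTotalDegree, X_pow_eq_monomial]
    exact (totalDegree_monomial_one_le _).trans (by simp)
  have h2 : ψ (X k ^ e) ∈ Polynomial.degreeLT K e := hle (h e h1)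
  rw [map_pow, hψX, mul_pow, ← Polynomial.C_pow, Polynomial.mem_degreeLT,
    Polynomial.degree_C_mul_X_pow e (pow_ne_zero e hk)] at h2
  exact lt_irrefl _ h2

end Homogeneous

section Lines

theorem exists_eigenvector_lines {ι : Type*} {m d M : ℕ} (hm : 2 ≤ m) (hd : d * (m - 1) + 1 = M)
    (P : (ι → ℂ) → ι → ℂ) (hP : ∀ (t : ℂ) w, P (t • w) = t ^ m • P w)
    (hP₀ : ∀ w, P w = 0 → w = 0) (hfin : {z | P z = z}.Finite)
    (hcard : Nat.card {z | P z = z} = M) :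
    ∃ v : Fin d → ι → ℂ, (∀ i, v i ≠ 0) ∧ (∀ i j, i ≠ j → ∀ lam : ℂ, v i ≠ lam • v j) ∧
      (∀ i, ∃ lam : ℂ, P (v i) = lam • v i) ∧
      ∀ w : ι → ℂ, w ≠ 0 → (∃ lam : ℂ, P w = lam • w) → ∃ i, ∃ mu : ℂ, w = mu • v i := by
  classical
  have hm1 : 0 < m - 1 := by omega
  have hmm : m = m - 1 + 1 := by omega
  have h0 : P 0 = 0 := by
    have := hP 0 0
    rwa [zero_pow (by omega), zero_smul, zero_smul] at this
  let Y : Finset {w : ι → ℂ // w ≠ 0} := (hfin.toFinset).subtype (· ≠ 0)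
  have hY : ∀ y : {w : ι → ℂ // w ≠ 0}, y ∈ Y ↔ P y.1 = y.1 := by simp [Y]
  have hYcard : Y.card = d * (m - 1) := by
    have h1 : Y.card = (hfin.toFinset.erase 0).card := by
      rw [Finset.card_subtype, Finset.filter_ne']
    have h2 : hfin.toFinset.card = M := by
      rw [← hcard, Nat.card_eq_card_finite_toFinset hfin]
    rw [h1, Finset.card_erase_of_mem (by simpa using h0), h2, ← hd, Nat.add_sub_cancel]
  let π : {w : ι → ℂ // w ≠ 0} → Projectivization ℂ (ι → ℂ) := fun w =>
    Projectivization.mk ℂ w.1 w.2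
  have hπ : ∀ y z, π y = π z ↔ ∃ a : ℂ, a • z.1 = y.1 := fun y z =>
    Projectivization.mk_eq_mk_iff' ℂ _ _ _ _
  have hfiber : ∀ b ∈ Y.image π, (Y.filter fun y => π y = b).card = m - 1 := by
    intro b hb
    obtain ⟨z, hz, rfl⟩ := Finset.mem_image.1 hb
    rw [hY] at hz
    have hprim := Complex.isPrimitiveRoot_exp (m - 1) hm1.ne'
    rw [← hprim.card_nthRootsFinset]
    have hroot : ∀ s : ℂ, s ∈ Polynomial.nthRootsFinset (m - 1) (1 : ℂ) ↔ s ^ (m - 1) = 1 :=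
      fun s => Polynomial.mem_nthRootsFinset hm1 1
    have hs0 : ∀ s ∈ Polynomial.nthRootsFinset (m - 1) (1 : ℂ), s • z.1 ≠ 0 := by
      intro s hs
      refine smul_ne_zero ?_ z.2
      rintro rfl
      rw [hroot, zero_pow hm1.ne'] at hs
      exact zero_ne_one hs
    symm
    refine Finset.card_bij (fun s hs => ⟨s • z.1, hs0 s hs⟩) ?_ ?_ ?_
    · intro s hs
      rw [Finset.mem_filter, hY]
      refine ⟨?_, (hπ _ _).2 ⟨s, rfl⟩⟩
      rw [hroot] at hs
      simp only
      rw [hP, hz, hmm, pow_succ, hs, one_mul]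
    · intro s _ t _ hst
      exact smul_left_injective ℂ z.2 (congrArg Subtype.val hst)
    · intro y hy
      rw [Finset.mem_filter, hY, hπ] at hy
      obtain ⟨hPy, a, ha⟩ := hy
      refine ⟨a, ?_, Subtype.ext ha⟩
      have ha0 : a ≠ 0 := by
        rintro rfl
        exact y.2 (by rw [← ha, zero_smul])
      rw [← ha, hP, hz] at hPy
      have h1 : a ^ m = a := smul_left_injective ℂ z.2 hPy
      rw [hroot]
      refine mul_right_cancel₀ ha0 ?_
      rw [← pow_succ, ← hmm, h1, one_mul]
  have himg : (Y.image π).card = d := by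
    have h1 := Finset.card_eq_sum_card_image π Y
    rw [Finset.sum_congr rfl hfiber, Finset.sum_const, smul_eq_mul, hYcard] at h1
    exact (Nat.eq_of_mul_eq_mul_right hm1 h1).symm
  let E := (Y.image π).equivFinOfCardEq himg
  have hrep : ∀ i, ∃ y ∈ Y, π y = (E.symm i).1 := fun i => Finset.mem_image.1 (E.symm i).2
  choose v hvY hvπ using hrep
  refine ⟨fun i => (v i).1, fun i => (v i).2, ?_, fun i => ⟨1, ?_⟩, ?_⟩
  · intro i j hij lam hlam
    have := (hπ (v i) (v j)).2 ⟨lam, hlam.symm⟩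
    rw [hvπ, hvπ] at this
    exact hij (E.symm.injective (Subtype.ext this))
  · rw [one_smul, ← hY]
    exact hvY i
  · rintro w hw ⟨lam, hlam⟩
    have hlam0 : lam ≠ 0 := by
      rintro rfl
      exact hw (hP₀ w (by rw [hlam, zero_smul]))
    obtain ⟨t, ht⟩ := IsAlgClosed.exists_pow_nat_eq lam⁻¹ hm1
    have ht0 : t ≠ 0 := by
      rintro rfl
      rw [zero_pow hm1.ne'] at ht
      exact inv_ne_zero hlam0 ht.symm
    have hy : (⟨t • w, smul_ne_zero ht0 hw⟩ : {w : ι → ℂ // w ≠ 0}) ∈ Y := by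
      rw [hY]
      simp only
      rw [hP, hlam, hmm, pow_succ, ht, smul_smul]
      congr 1
      field_simp
    have hmem := Finset.mem_image_of_mem π hy
    refine ⟨E ⟨_, hmem⟩, ?_⟩
    have h1 := hvπ (E ⟨_, hmem⟩)
    rw [Equiv.symm_apply_apply] at h1
    obtain ⟨a, ha⟩ := (hπ _ _).1 h1.symm
    refine ⟨t⁻¹ * a, ?_⟩
    rw [mul_smul, ha, smul_smul, inv_mul_cancel₀ ht0, one_smul]

end Lines

section GenericForm

variable {ι K : Type*} [Field K]

/-- The specialization of the indeterminate coefficients of a family of forms of degree `m` to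
the coefficients of `p`. -/
noncomputable def coeffHom (m : ℕ) (p : ι → MvPolynomial ι K) :
    MvPolynomial (ι × {μ : ι →₀ ℕ // (μ.sum fun _ e => e) = m}) K →+* K :=
  eval fun q => coeff q.2.1 (p q.1)

theorem coeffHom_surjective (m : ℕ) (p : ι → MvPolynomial ι K) :
    Function.Surjective (coeffHom m p) := fun a => ⟨C a, eval_C a⟩

variable [Fintype ι]

open Classical in
/-- The form of degree `m` whose coefficients are the indeterminates indexed by `k`. -/
noncomputable def genericForm (m : ℕ) (k : ι) :
    MvPolynomial ι (MvPolynomial (ι × {μ : ι →₀ ℕ // (μ.sum fun _ e => e) = m}) K) :=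
  ∑ μ ∈ Finset.univ.finsuppAntidiag m,
    if h : (μ.sum fun _ e => e) = m then monomial μ (X (k, ⟨μ, h⟩)) else 0

theorem coeff_genericForm (m : ℕ) (k : ι) (μ : ι →₀ ℕ) :
    coeff μ (genericForm (K := K) m k) =
      open Classical in if h : (μ.sum fun _ e => e) = m then X (k, ⟨μ, h⟩) else 0 := by
  classical
  have hterm : ∀ ν : ι →₀ ℕ, coeff μ (if h : (ν.sum fun _ e => e) = m then
      (monomial ν (X (k, ⟨ν, h⟩)) :
        MvPolynomial ι (MvPolynomial (ι × {μ : ι →₀ ℕ // (μ.sum fun _ e => e) = m}) K))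
      else 0) = if ν = μ then (if h : (μ.sum fun _ e => e) = m then X (k, ⟨μ, h⟩) else 0)
        else 0 := by
    intro ν
    rcases eq_or_ne ν μ with rfl | hne
    · rw [if_pos rfl]
      split_ifs <;> simp
    · split_ifs <;> simp [hne]
  rw [genericForm, coeff_sum, Finset.sum_congr rfl fun ν _ => hterm ν, Finset.sum_ite_eq']
  split_ifs with h1 h2 h2
  · rfl
  · rfl
  · refine absurd (Finset.mem_finsuppAntidiag.2 ⟨?_, Finset.subset_univ _⟩) h1
    rw [← h2, Finsupp.sum_fintype _ _ fun _ => rfl]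
  · rfl

theorem map_genericForm {m : ℕ} {p : ι → MvPolynomial ι K} (hp : ∀ k, (p k).IsHomogeneous m)
    (k : ι) : map (coeffHom m p) (genericForm m k) = p k := by
  ext μ
  rw [coeff_map, coeff_genericForm]
  split_ifs with h
  · simp [coeffHom]
  · rw [map_zero]
    refine ((hp k).coeff_eq_zero fun hμ => h ?_).symm
    rw [← hμ, Finsupp.degree_eq_sum, Finsupp.sum_fintype _ _ fun _ => rfl]

theorem totalDegree_genericForm_sub_le {m : ℕ} (hm : 1 ≤ m) (k : ι) :
    (genericForm (K := K) m k - X k).totalDegree ≤ m := by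
  refine (totalDegree_sub _ _).trans (max_le (Finset.sup_le fun μ hμ => ?_) ?_)
  · rw [mem_support_iff, coeff_genericForm] at hμ
    by_contra hlt
    exact hμ (dif_neg fun h => hlt h.le)
  · rwa [totalDegree_X]

end GenericForm

end EigenCount

/-- **Cartwright–Sturmfels count** (Proposition 6.1): a general tensor
`M ∈ Hom(S^mℂ^{n+1}, ℂ^{n+1})`, represented by its component polynomials
`p_0,…,p_n` homogeneous of degree `m` (`M(v^m) = (p_0(v),…,p_n(v))`), has exactly
`(m^{n+1} − 1)/(m − 1) = Σ_{i=0}^n m^i` eigenvector lines. -/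
theorem statement8 (n m : ℕ) (hn : 1 ≤ n) (hm : 2 ≤ m) :
    ∃ D : MvPolynomial (Fin (n+1) × {μ : Fin (n+1) →₀ ℕ // (μ.sum fun _ e => e) = m}) ℂ,
      D ≠ 0 ∧
      ∀ p : Fin (n+1) → MvPolynomial (Fin (n+1)) ℂ,
        (∀ k, (p k).IsHomogeneous m) →
        MvPolynomial.eval (fun q => MvPolynomial.coeff q.2.1 (p q.1)) D ≠ 0 →
        ∃ v : Fin (∑ i ∈ Finset.range (n+1), m ^ i) → Fin (n+1) → ℂ,
          (∀ i, v i ≠ 0) ∧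
          (∀ i j, i ≠ j → ∀ lam : ℂ, v i ≠ lam • v j) ∧
          (∀ i, ∃ lam : ℂ, (fun k => MvPolynomial.eval (v i) (p k)) = lam • v i) ∧
          (∀ w : Fin (n+1) → ℂ, w ≠ 0 →
            (∃ lam : ℂ, (fun k => MvPolynomial.eval w (p k)) = lam • w) →
            ∃ i, ∃ mu : ℂ, w = mu • v i) := by
  obtain ⟨D, hD₀, hD⟩ := EigenCount.exists_discriminant
    (EigenCount.coeffHom_surjective m fun k => (X k ^ m : MvPolynomial (Fin (n+1)) ℂ)) hm
    (F := fun k => EigenCount.genericForm m k - X k)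
    (fun k => EigenCount.totalDegree_genericForm_sub_le (by omega) k) (fun k => by
      rw [map_sub, map_X, EigenCount.map_genericForm fun k => isHomogeneous_X_pow k m])
  refine ⟨D, fun h => by simp [h] at hD₀, fun p hp hDp => ?_⟩
  obtain ⟨hspan, hjac⟩ := hD (EigenCount.coeffHom m p) hDp
  have hmap : ∀ k, map (EigenCount.coeffHom m p) (EigenCount.genericForm m k - X k) =
      p k - X k := fun k => by rw [map_sub, map_X, EigenCount.map_genericForm hp]
  simp only [hmap] at hspan hjac
  have hdeg : ∀ k, (p k - X k).totalDegree ≤ m := fun k =>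
    (totalDegree_sub _ _).trans (max_le (hp k).totalDegree_le (by rw [totalDegree_X]; omega))
  obtain ⟨hfinite, hrank⟩ := EigenCount.finrank_quotient_span (by omega) hdeg hspan
  have := EigenCount.isReduced_quotient_of_jacobian (fun k => p k - X k) hjac
  obtain ⟨hzfin, hzcard⟩ := EigenCount.card_zeros_eq_finrank fun k => p k - X k
  have hzeros : {z : Fin (n+1) → ℂ | ∀ k, eval z (p k - X k) = 0} =
      {z | (fun k => eval z (p k)) = z} := by
    ext z
    simp [funext_iff, sub_eq_zero]
  rw [hrank, Fintype.card_fin] at hzcard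
  rw [hzeros] at hzfin hzcard
  have hd : (∑ i ∈ Finset.range (n+1), m ^ i) * (m - 1) + 1 = m ^ (n+1) := by
    have := geom_sum_mul_add (m - 1) (n+1)
    rwa [Nat.sub_add_cancel (by omega)] at this
  exact EigenCount.exists_eigenvector_lines hm hd (fun z k => eval z (p k))
    (fun t w => funext fun k => EigenCount.eval_smul_of_isHomogeneous (hp k) t w)
    (fun w hw => EigenCount.eq_zero_of_eval_eq_zero hm hp hspan (congrFun hw)) hzfin hzcard
end
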